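/- arXiv:0801.2856 — 2 statements merged into one kernel-verified Lean document; each statement's English description precedes it below -/
import Mathlib

section
/- Let Γ be a completed primitive simple graph with vertex set V of cardinality ℓ+2 ≥ 5. For distinct vertices u, w, z ∈ V and a unit vector e ∈ ℝ⁴, consider the affine position-space integral I(u,w,z,e) = ∫ ∏_{{i,j} edge of Γ with u ∉ {i,j}} ‖x_i − x_j‖^{−2} ∏_{v ∈ V∖{u,w,z}} d⁴x_v, taken over all assignments x : V∖{u,w,z} → ℝ⁴ extended by x_w = 0 and x_z = e. Then I(u,w,z,e) is finite for every such choice, and its value is independent of the choice of the three distinct vertices u, w, z and of the unit vector e. -/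
open scoped Classical

/-- The set of edges of `G` with one endpoint in `A` and the other outside `A`. -/
noncomputable def cutEdges {V : Type*} [Fintype V] (G : SimpleGraph V) (A : Finset V) :
    Finset (Sym2 V) :=
  G.edgeFinset.filter (fun e => ∃ x, x ∈ e ∧ x ∈ A ∧ ∃ y, y ∈ e ∧ y ∉ A)

/-- A finite simple graph is *completed primitive* if it is 4-regular, connected, has at
least 3 vertices, and every edge cut separating two parts with at least two vertices each
has size strictly greater than 4. -/
def CompletedPrimitive {V : Type*} [Fintype V] (G : SimpleGraph V) : Prop :=
  (∀ v : V, G.degree v = 4) ∧ G.Connected ∧ 3 ≤ Fintype.card V ∧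
    ∀ A : Finset V, 2 ≤ A.card → 2 ≤ Aᶜ.card → 4 < (cutEdges G A).card

open scoped Classical
open MeasureTheory

/-- 4-dimensional Euclidean space. -/
abbrev R4 := EuclideanSpace ℝ (Fin 4)

/-- Extension of an assignment `x` of position vectors to the vertices outside `{u,w,z}`
by `x_w = 0` and `x_z = e` (the value at `u` is irrelevant). -/
noncomputable def extendPos {V : Type*} (u w z : V) (e : R4)
    (x : {v : V // v ≠ u ∧ v ≠ w ∧ v ≠ z} → R4) (v : V) : R4 :=
  if v = w then 0
  else if v = z then e
  else if h : v ≠ u ∧ v ≠ w ∧ v ≠ z then x ⟨v, h⟩ else 0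

/-- The position-space integrand of the period: the product over all edges of `Γ` not
meeting `u` of `‖x_i − x_j‖⁻²`. -/
noncomputable def periodIntegrand {V : Type*} [Fintype V] (G : SimpleGraph V)
    (u w z : V) (e : R4) (x : {v : V // v ≠ u ∧ v ≠ w ∧ v ≠ z} → R4) : ℝ :=
  ∏ ed ∈ G.edgeFinset.filter (fun ed => u ∉ ed),
    Sym2.lift ⟨fun i j => (‖extendPos u w z e x i - extendPos u w z e x j‖ ^ 2)⁻¹,
      fun i j => by simp [norm_sub_rev]⟩ ed

/-- The affine position-space integral `I(u,w,z,e)` of a graph. -/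
noncomputable def positionIntegral {V : Type*} [Fintype V] (G : SimpleGraph V)
    (u w z : V) (e : R4) : ℝ :=
  ∫ x : {v : V // v ≠ u ∧ v ≠ w ∧ v ≠ z} → R4, periodIntegrand G u w z e x

/-- The period of a completed primitive graph on `ℓ + 2` vertices, computed in affine
position space: `P_Γ = π^{−2(ℓ−1)} I(u,w,z,e)`. -/
noncomputable def period {V : Type*} [Fintype V] (G : SimpleGraph V)
    (u w z : V) (e : R4) : ℝ :=
  (Real.pi ^ (2 * (Fintype.card V - 3)))⁻¹ * positionIntegral G u w z e

/-!
Everything works for a `q`-regular graph in a Euclidean space of any dimension `d`, each edge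
carrying the propagator `‖x i - x j‖ ^ (-2 * d / q)`. With this exponent regularity makes the
integrand conformally covariant.

*Independence.* Isometries move the unit vector `e` and exchange the vertices at the origin and at
`e`; the inversion in the unit sphere exchanges the vertices at the origin and at infinity. To
replace the unit vertex `z` by `z'`, hold the position `b` of `z'` fixed: a scaling by `‖b‖⁻¹`
followed by a reflection moves `z'` to `e` and `z` to the inverse of `b`, and the change of
variables `b ↦ inversion 0 1 b` does the rest.

*Finiteness.* Merge the closest two clusters of points repeatedly. This yields a tree on the
vertices other than `u` such that the product of the propagators is at most a constant times the
product of `r ^ (-d)` over the lengths `r` of the tree edges, a bound that misses integrability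
only logarithmically. By primitivity every intermediate cluster has fewer inner edges than the
logarithmic case requires, which gains a power of `ρ / R`, the ratio of the shortest to the longest
tree edge. Shared out over the tree edges, it damps each of them at both ends of the scale, and the
vertices can be integrated out one after the other from the leaves.
-/

open scoped ENNReal
open Module (finrank)

/-! ### Marginal integrals -/

section Marginal

open Function (updateFinset)

variable {ι X : Type*} [MeasurableSpace X] {μ : Measure X}

lemma lintegral_pi_subtype_eq_lmarginal (P : ι → Prop) [DecidablePred P]
    [inst : Fintype {i : ι // P i}] {s : Finset ι} (hP : ∀ i, P i ↔ i ∈ s) (y : ι → X)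
    (F : (ι → X) → ℝ≥0∞) :
    ∫⁻ x : {i : ι // P i} → X, F (fun i => if h : P i then x ⟨i, h⟩ else y i)
      ∂Measure.pi (fun _ => μ) = (∫⋯∫⁻_s, F ∂fun _ => μ) y := by
  obtain rfl : P = fun i => i ∈ s := funext fun i => propext (hP i)
  obtain rfl : inst = Finset.Subtype.fintype s := Subsingleton.elim _ _
  refine lintegral_congr fun x => congrArg F (funext fun i => ?_)
  by_cases hi : i ∈ s <;> simp [updateFinset, hi]

lemma lintegral_eq_lintegral_mul_comp {φ : X → X} (hφ : Measurable φ) {J : X → ℝ≥0∞}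
    (hJ : Measurable J) (hφJ : (μ.withDensity J).map φ = μ) {g : X → ℝ≥0∞} (hg : Measurable g) :
    ∫⁻ t, g t ∂μ = ∫⁻ t, J t * g (φ t) ∂μ := by
  conv_lhs => rw [← hφJ, lintegral_map hg hφ]
  exact lintegral_withDensity_eq_lintegral_mul _ hJ (hg.comp hφ)

variable [SigmaFinite μ]

lemma lmarginal_comp_eq_lmarginal_prod_mul {φ : X → X} (hφ : Measurable φ) {J : X → ℝ≥0∞}
    (hJ : Measurable J) (hφJ : (μ.withDensity J).map φ = μ) {F : (ι → X) → ℝ≥0∞}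
    (hF : Measurable F) (s : Finset ι) (y : ι → X) :
    (∫⋯∫⁻_s, F ∂fun _ => μ) (φ ∘ y)
      = (∫⋯∫⁻_s, fun x => (∏ i ∈ s, J (x i)) * F (φ ∘ x) ∂fun _ => μ) y := by
  have hmeas (s : Finset ι) : Measurable fun x : ι → X => (∏ i ∈ s, J (x i)) * F (φ ∘ x) := by
    fun_prop
  induction s using Finset.induction generalizing y with
  | empty => simp
  | insert i s hi ih =>
    rw [lmarginal_insert _ hF hi, lmarginal_insert _ (hmeas _) hi,
      lintegral_eq_lintegral_mul_comp hφ hJ hφJ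
        (g := fun t => (∫⋯∫⁻_s, F ∂fun _ => μ) (Function.update (φ ∘ y) i t))
        ((hF.lmarginal _).comp (measurable_update _))]
    refine lintegral_congr fun t => ?_
    rw [← Function.comp_update, ih, lmarginal, lmarginal]
    refine (lintegral_const_mul _ ((hmeas s).comp measurable_updateFinset)).symm.trans
      (lintegral_congr fun x => ?_)
    simp [Finset.prod_insert hi, updateFinset, hi, mul_assoc]

lemma ae_updateFinset_ne [NullSingletonClass μ] [MeasurableEq X] (y : ι → X) {s : Finset ι}
    {i j : ι} (hi : i ∈ s) (hij : i ≠ j) :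
    ∀ᵐ x ∂Measure.pi fun _ : s => μ, updateFinset y s x i ≠ updateFinset y s x j := by
  set D : Set (ι → X) := {x | x i = x j}
  have hD : Measurable (D.indicator (1 : (ι → X) → ℝ≥0∞)) :=
    measurable_one.indicator (measurableSet_eq_fun (by fun_prop) (by fun_prop))
  have slice_eq_zero (x : ι → X) : ∫⁻ t, D.indicator 1 (Function.update x i t) ∂μ = 0 := by
    have (t : X) : D.indicator (1 : (ι → X) → ℝ≥0∞) (Function.update x i t)
        = Set.indicator {x j} 1 t := by
      simp [D, Set.indicator, hij.symm]
    rw [lintegral_congr this, lintegral_indicator_one (measurableSet_singleton _),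
      measure_singleton]
  have integral_eq_zero : (∫⋯∫⁻_s, D.indicator 1 ∂fun _ => μ) y = 0 := by
    rw [lmarginal_erase' _ hD hi]
    simp [slice_eq_zero, lmarginal]
  filter_upwards [(lintegral_eq_zero_iff (hD.comp measurable_updateFinset)).1 integral_eq_zero]
    with x hx hxij
  simp [D, hxij] at hx

lemma ae_injOn_updateFinset [NullSingletonClass μ] [MeasurableEq X] [Countable ι] {y : ι → X}
    {s : Finset ι} {T : Set ι} (hy : Set.InjOn y (T \ s)) :
    ∀ᵐ x ∂Measure.pi fun _ : s => μ, Set.InjOn (updateFinset y s x) T := by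
  have hne : ∀ᵐ x ∂Measure.pi fun _ : s => μ, ∀ i j, i ∈ s → i ≠ j →
      updateFinset y s x i ≠ updateFinset y s x j := by
    simp only [ae_all_iff, Filter.eventually_imp_distrib_left]
    exact fun i j hi hij => ae_updateFinset_ne y hi hij
  filter_upwards [hne] with x hx i hi j hj hij
  by_contra hne
  by_cases his : i ∈ s
  · exact hx i j his hne hij
  by_cases hjs : j ∈ s
  · exact hx j i hjs (Ne.symm hne) hij.symm
  · exact hne (hy ⟨hi, his⟩ ⟨hj, hjs⟩ (by simpa [updateFinset, his, hjs] using hij))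

lemma lmarginal_prod_sub_parent [AddGroup X] [MeasurableAdd X] [MeasurableSub₂ X]
    [μ.IsAddRightInvariant] {α : Type*} [LinearOrder α] (h : ι → α) (p : ι → ι)
    {g : X → ℝ≥0∞} (hg : Measurable g) {s : Finset ι} (hp : ∀ v ∈ s, h v < h (p v)) (y : ι → X) :
    (∫⋯∫⁻_s, fun x => ∏ v ∈ s, g (x v - x (p v)) ∂fun _ => μ) y = (∫⁻ t, g t ∂μ) ^ s.card := by
  have hmeas (s : Finset ι) : Measurable fun x : ι → X => ∏ v ∈ s, g (x v - x (p v)) := by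
    fun_prop
  induction s using Finset.induction_on_min_value h with
  | empty => simp
  | insert j s hj hmin ih =>
    have parent_ne : ∀ v ∈ insert j s, p v ≠ j := by
      intro v hv hpv
      have hlt : h v < h j := hpv ▸ hp v hv
      obtain rfl | hvs := Finset.mem_insert.1 hv
      exacts [hlt.false, hlt.not_ge (hmin v hvs)]
    have integrate_least (x : ι → X) :
        ∫⁻ t, ∏ v ∈ insert j s, g (Function.update x j t v - Function.update x j t (p v)) ∂μ
          = (∫⁻ t, g t ∂μ) * ∏ v ∈ s, g (x v - x (p v)) := by
      have hprod (t : X) :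
          ∏ v ∈ insert j s, g (Function.update x j t v - Function.update x j t (p v))
            = g (t - x (p j)) * ∏ v ∈ s, g (x v - x (p v)) := by
        rw [Finset.prod_insert hj, Function.update_self,
          Function.update_of_ne (parent_ne j (Finset.mem_insert_self j s))]
        congr 1
        refine Finset.prod_congr rfl fun v hv => ?_
        rw [Function.update_of_ne (ne_of_mem_of_not_mem hv hj),
          Function.update_of_ne (parent_ne v (Finset.mem_insert_of_mem hv))]
      simp_rw [hprod]
      rw [lintegral_mul_const _ (by fun_prop), lintegral_sub_right_eq_self]
    rw [lmarginal_insert' _ (hmeas _) hj]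
    simp_rw [integrate_least]
    rw [lmarginal, Finset.card_insert_of_notMem hj, pow_succ',
      ← ih fun v hv => hp v (Finset.mem_insert_of_mem hv)]
    exact lintegral_const_mul _ ((hmeas s).comp measurable_updateFinset)

end Marginal

/-! ### Integrals on Euclidean space -/

section Euclidean

open EuclideanGeometry (inversion)

/-- The profile `t ^ (-a)` damped by the factor `t ^ ε` for `t ≤ 1` and `t ^ (-ε)` for `t ≥ 1`.
In dimension `a` it is the radial part of an integrable function, although `t ^ (-a)` itself
diverges logarithmically at both ends. -/
noncomputable def scaleKernel (a ε t : ℝ) : ℝ := t ^ (-a) * min t t⁻¹ ^ ε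

lemma scaleKernel_nonneg (a ε : ℝ) {t : ℝ} (ht : 0 ≤ t) : 0 ≤ scaleKernel a ε t := by
  have : 0 ≤ min t t⁻¹ := le_min ht (inv_nonneg.2 ht)
  unfold scaleKernel
  positivity

@[fun_prop]
lemma measurable_scaleKernel (a ε : ℝ) : Measurable (scaleKernel a ε) := by
  unfold scaleKernel
  fun_prop

lemma scaleKernel_rpow (a ε b : ℝ) {t : ℝ} (ht : 0 ≤ t) :
    scaleKernel a ε t ^ b = scaleKernel (a * b) (ε * b) t := by
  have hmin : 0 ≤ min t t⁻¹ := le_min ht (inv_nonneg.2 ht)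
  rw [scaleKernel, scaleKernel, Real.mul_rpow (by positivity) (by positivity), ← Real.rpow_mul ht,
    ← Real.rpow_mul hmin, neg_mul]

lemma scaleKernel_of_le_one {a ε t : ℝ} (ht : 0 < t) (ht' : t ≤ 1) :
    scaleKernel a ε t = t ^ (ε - a) := by
  have hmin : min t t⁻¹ = t := min_eq_left (ht'.trans ((one_le_inv₀ ht).2 ht'))
  rw [scaleKernel, hmin, ← Real.rpow_add ht, neg_add_eq_sub]

lemma scaleKernel_of_one_le {a ε t : ℝ} (ht : 1 ≤ t) : scaleKernel a ε t = t ^ (-ε - a) := by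
  have ht0 : 0 < t := one_pos.trans_le ht
  have hmin : min t t⁻¹ = t⁻¹ := min_eq_right ((inv_le_one_of_one_le₀ ht).trans ht)
  rw [scaleKernel, hmin, Real.inv_rpow ht0.le, ← Real.rpow_neg ht0.le, ← Real.rpow_add ht0]
  ring_nf

variable {E : Type*} [NormedAddCommGroup E] [InnerProductSpace ℝ E] [FiniteDimensional ℝ E]

lemma abs_det_fderiv_inversion (c x : E) (R : ℝ) :
    |((R / dist x c) ^ 2 • ((ℝ ∙ (x - c))ᗮ.reflection : E →L[ℝ] E)).det|
      = (R / dist x c) ^ (2 * finrank ℝ E) := by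
  have hdet := LinearMap.det_smul ((R / dist x c) ^ 2)
    ((ℝ ∙ (x - c))ᗮ.reflection.toLinearEquiv : E →ₗ[ℝ] E)
  rw [Submodule.det_reflection] at hdet
  refine (congrArg abs hdet).trans ?_
  rw [abs_mul, abs_pow _ (finrank ℝ (ℝ ∙ (x - c))ᗮᗮ), abs_neg, abs_one, one_pow, mul_one,
    ← pow_mul, abs_of_nonneg (by rw [pow_mul]; positivity)]

variable [MeasurableSpace E] [BorelSpace E]

lemma integrable_scaleKernel_norm [Nontrivial E] {ε : ℝ} (hε : 0 < ε) :
    Integrable fun t : E => scaleKernel (finrank ℝ E) ε ‖t‖ := by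
  have radial (t b : ℝ) (ht : 0 < t) :
      t ^ (finrank ℝ E - 1) • t ^ (b - finrank ℝ E) = t ^ (b - 1) := by
    rw [smul_eq_mul, ← Real.rpow_natCast, Nat.cast_sub Module.finrank_pos, Nat.cast_one,
      ← Real.rpow_add ht]
    ring_nf
  rw [integrable_fun_norm_addHaar volume (f := scaleKernel (finrank ℝ E) ε),
    ← Set.Ioc_union_Ioi_eq_Ioi zero_le_one, integrableOn_union]
  constructor
  · refine (intervalIntegral.intervalIntegrable_rpow' (a := 0) (b := 1) (r := ε - 1)
      (by linarith)).1.congr_fun (fun t ht => ?_) measurableSet_Ioc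
    simp only [scaleKernel_of_le_one ht.1 ht.2, radial t ε ht.1]
  · refine (integrableOn_Ioi_rpow_of_lt (a := -ε - 1) (c := 1) (by linarith)
      one_pos).congr_fun (fun t ht => ?_) measurableSet_Ioi
    simp only [scaleKernel_of_one_le (le_of_lt ht), radial t (-ε) (one_pos.trans ht)]

@[fun_prop]
lemma measurable_inversion (c : E) (R : ℝ) : Measurable (inversion c R) := by
  unfold inversion
  fun_prop

lemma map_inversion_withDensity [Nontrivial E] (c : E) {R : ℝ} (hR : R ≠ 0) :
    (volume.withDensity fun x : E =>
      ENNReal.ofReal ((R / dist x c) ^ (2 * finrank ℝ E))).map (inversion c R) = volume := by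
  have restrict_compl_center : (volume : Measure E).restrict {c}ᶜ = volume :=
    Measure.restrict_eq_self_of_ae_mem (by simp [ae_iff])
  have image_compl_center : inversion c R '' {c}ᶜ = {c}ᶜ := by
    rw [Set.image_compl_eq (EuclideanGeometry.inversion_bijective c hR), Set.image_singleton,
      EuclideanGeometry.inversion_self]
  have hmap := map_withDensity_abs_det_fderiv_eq_addHaar volume
    (measurableSet_singleton c).compl.nullMeasurableSet
    (fun x hx => (EuclideanGeometry.hasFDerivAt_inversion (R := R) hx).hasFDerivWithinAt)
    (EuclideanGeometry.inversion_injective c hR).injOn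
  simpa only [image_compl_center, restrict_compl_center, abs_det_fderiv_inversion] using hmap

lemma map_smul_withDensity {r : ℝ} (hr : 0 < r) :
    (volume.withDensity fun _ : E => ENNReal.ofReal (r ^ finrank ℝ E)).map (r • ·) = volume := by
  rw [withDensity_const, Measure.map_smul, Measure.map_addHaar_smul _ hr.ne', smul_smul,
    ← ENNReal.ofReal_mul (by positivity), abs_of_pos (by positivity),
    mul_inv_cancel₀ (by positivity), ENNReal.ofReal_one, one_smul]

end Euclidean

/-! ### The conformal density of a graph -/

section Density

variable {V : Type*}

/-- The distance between the positions that a configuration `y` assigns to the two ends of an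
unordered pair. -/
noncomputable def edgeDist {X : Type*} [PseudoMetricSpace X] (y : V → X) : Sym2 V → ℝ :=
  Sym2.lift ⟨fun i j => dist (y i) (y j), fun _ _ => dist_comm _ _⟩

@[simp]
lemma edgeDist_mk {X : Type*} [PseudoMetricSpace X] (y : V → X) (i j : V) :
    edgeDist y s(i, j) = dist (y i) (y j) := rfl

variable [Fintype V] (G : SimpleGraph V)

/-- The edges of `G` that do not meet `u`. -/
noncomputable def edgesOff (u : V) : Finset (Sym2 V) := {ed ∈ G.edgeFinset | u ∉ ed}

/-- The product of the inverse squared lengths of the edges that do not meet `u`, as a function of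
a configuration of all vertices. The vertex `u` is thought of as lying at infinity: its position
is ignored. -/
noncomputable def propagatorProd {X : Type*} [PseudoMetricSpace X] (u : V) (y : V → X) : ℝ :=
  ∏ ed ∈ edgesOff G u, (edgeDist y ed ^ 2)⁻¹

lemma propagatorProd_nonneg {X : Type*} [PseudoMetricSpace X] (u : V) (y : V → X) :
    0 ≤ propagatorProd G u y :=
  Finset.prod_nonneg fun _ _ => by positivity

lemma propagatorProd_congr {X Y : Type*} [PseudoMetricSpace X] [PseudoMetricSpace Y] {u : V}
    {x : V → X} {y : V → Y}
    (h : ∀ i j, i ≠ u → j ≠ u → dist (x i) (x j) = dist (y i) (y j)) :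
    propagatorProd G u x = propagatorProd G u y := by
  refine Finset.prod_congr rfl fun ed hed => ?_
  induction ed with | _ i j
  have hu := (Finset.mem_filter.1 hed).2
  simp only [Sym2.mem_iff, not_or] at hu
  rw [edgeDist_mk, edgeDist_mk, h i j (Ne.symm hu.1) (Ne.symm hu.2)]

variable {E : Type*} [NormedAddCommGroup E] [InnerProductSpace ℝ E] (q : ℕ)

/-- The density whose integral is the period of a `q`-regular graph in dimension `d = dim E`. The
exponent `d / q`, which is `1` for 4-regular graphs in dimension 4, is the one that makes the
density covariant under inversions. -/
noncomputable def conformalDensity (u : V) (y : V → E) : ℝ :=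
  propagatorProd G u y ^ (finrank ℝ E / q : ℝ)

lemma conformalDensity_nonneg (u : V) (y : V → E) : 0 ≤ conformalDensity G q u y :=
  Real.rpow_nonneg (propagatorProd_nonneg G u y) _

lemma conformalDensity_congr {u : V} {x y : V → E}
    (h : ∀ i j, i ≠ u → j ≠ u → dist (x i) (x j) = dist (y i) (y j)) :
    conformalDensity G q u x = conformalDensity G q u y := by
  rw [conformalDensity, conformalDensity, propagatorProd_congr G h]

variable [FiniteDimensional ℝ E] [MeasurableSpace E] [BorelSpace E]

@[fun_prop]
lemma measurable_conformalDensity (u : V) :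
    Measurable (conformalDensity G q u : (V → E) → ℝ) := by
  have measurable_edgeDist (ed : Sym2 V) : Measurable fun y : V → E => edgeDist y ed := by
    induction ed with | _ i j
    simp only [edgeDist_mk]
    fun_prop
  exact (Finset.measurable_prod _ fun ed _ =>
    ((measurable_edgeDist ed).pow_const 2).inv).pow_const _

/-- The period integral as an extended nonnegative number: `u` lies at infinity, `w` at the origin
and `z` at `e`, and the remaining vertices are integrated out. -/
noncomputable def periodLIntegral (u w z : V) (e : E) : ℝ≥0∞ :=
  (∫⋯∫⁻_({u, w, z}ᶜ : Finset V), fun y => ENNReal.ofReal (conformalDensity G q u y))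
    (Pi.single z e)

variable {G q}

lemma lmarginal_conformalDensity_congr {u : V} {s : Finset V} {y y' : V → E}
    (h : ∀ v ∉ s, v ≠ u → y v = y' v) :
    (∫⋯∫⁻_s, fun x => ENNReal.ofReal (conformalDensity G q u x)) y
      = (∫⋯∫⁻_s, fun x => ENNReal.ofReal (conformalDensity G q u x)) y' := by
  have update_eq (x : s → E) (v : V) (hv : v ≠ u) :
      Function.updateFinset y s x v = Function.updateFinset y' s x v := by
    by_cases hvs : v ∈ s
    · simp [Function.updateFinset, hvs]
    · simp [Function.updateFinset, hvs, h v hvs hv]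
  refine lintegral_congr fun x => congrArg ENNReal.ofReal ?_
  exact conformalDensity_congr G q fun i j hi hj => by rw [update_eq x i hi, update_eq x j hj]

lemma periodLIntegral_eq_lmarginal {u w z : V} {e : E} (hwz : w ≠ z) {y : V → E} (hw : y w = 0)
    (hz : y z = e) :
    periodLIntegral G q u w z e =
      (∫⋯∫⁻_({u, w, z}ᶜ : Finset V), fun x => ENNReal.ofReal (conformalDensity G q u x)) y := by
  refine lmarginal_conformalDensity_congr fun v hv hvu => ?_
  simp only [Finset.mem_compl, Finset.mem_insert, Finset.mem_singleton, not_not] at hv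
  obtain rfl | rfl | rfl := hv
  exacts [(hvu rfl).elim, by simp [hw, hwz], by simp [hz]]

lemma lmarginal_conformalDensity_isometry {φ : E → E} (hφ : Isometry φ)
    (hφ' : MeasurePreserving φ) (u : V) (s : Finset V) (y : V → E) :
    (∫⋯∫⁻_s, fun x => ENNReal.ofReal (conformalDensity G q u x)) (φ ∘ y)
      = (∫⋯∫⁻_s, fun x => ENNReal.ofReal (conformalDensity G q u x)) y := by
  have density_comp (x : V → E) :
      conformalDensity G q u (φ ∘ x) = conformalDensity G q u x :=
    conformalDensity_congr G q fun i j _ _ => hφ.dist_eq (x i) (x j)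
  rw [lmarginal_comp_eq_lmarginal_prod_mul hφ'.measurable (J := 1) measurable_one
    (by rw [withDensity_one, hφ'.map_eq]) (by fun_prop)]
  simp only [Pi.one_apply, Finset.prod_const_one, one_mul, density_comp]

lemma periodLIntegral_eq_of_norm_eq {u w z : V} {e e' : E} (hwz : w ≠ z) (h : ‖e‖ = ‖e'‖) :
    periodLIntegral G q u w z e = periodLIntegral G q u w z e' := by
  set A := (ℝ ∙ (e - e'))ᗮ.reflection
  rw [periodLIntegral, ← lmarginal_conformalDensity_isometry A.isometry A.measurePreserving,
    periodLIntegral_eq_lmarginal hwz (y := A ∘ Pi.single z e) (by simp [hwz])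
      (by simpa [A] using Submodule.reflection_sub h)]

lemma periodLIntegral_swap_origin_unit {u w z : V} (e : E) (hwz : w ≠ z) :
    periodLIntegral G q u w z e = periodLIntegral G q u z w e := by
  have hs : ({u, w, z} : Finset V) = {u, z, w} := by rw [Finset.pair_comm]
  rw [periodLIntegral, ← lmarginal_conformalDensity_isometry (IsometryEquiv.subLeft e).isometry
      (Measure.measurePreserving_sub_left volume e), hs,
    periodLIntegral_eq_lmarginal hwz.symm (y := IsometryEquiv.subLeft e ∘ Pi.single z e)
      (by simp) (by simp [hwz])]

end Density

/-! ### Inversion, scaling and independence of the choices -/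

section Conformal

open EuclideanGeometry (inversion)

variable {V E : Type*} [NormedAddCommGroup E] [InnerProductSpace ℝ E]

lemma inv_sq_edgeDist_inversion {u w : V} (huw : u ≠ w) {x : V → E}
    (hx : ∀ v, x v = 0 ↔ v = u ∨ v = w) {ed : Sym2 V} (hed : ¬ ed.IsDiag) :
    (if u ∉ ed then (edgeDist (inversion 0 1 ∘ x) ed ^ 2)⁻¹ else 1)
      = (if w ∉ ed then (edgeDist x ed ^ 2)⁻¹ else 1)
        * (ed.map fun v => if x v = 0 then 1 else ‖x v‖).mul ^ 2 := by
  have norm_inversion (t : E) : ‖inversion 0 1 t‖ = ‖t‖⁻¹ := by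
    simpa using EuclideanGeometry.dist_inversion_center 0 t 1
  induction ed with | _ i j
  rw [Sym2.mk_isDiag_iff] at hed
  simp only [Sym2.map_mk, Sym2.mul_mk, edgeDist_mk, Function.comp_apply, Sym2.mem_iff]
  by_cases hi : x i = 0 <;> by_cases hj : x j = 0
  · have hi' := (hx i).1 hi
    have hj' := (hx j).1 hj
    have hu : u = i ∨ u = j := by grind
    have hw : w = i ∨ w = j := by grind
    simp [hu, hw, hi, hj]
  · have hj' := mt (hx j).2 hj
    push Not at hj'
    obtain rfl | rfl := (hx i).1 hi
    · simp [hi, hj, huw.symm, hj'.2.symm]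
    · simp [hi, hj, huw, hj'.1.symm, norm_inversion]
  · have hi' := mt (hx i).2 hi
    push Not at hi'
    obtain rfl | rfl := (hx j).1 hj
    · simp [hi, hj, huw.symm, hi'.2.symm]
    · simp [hi, hj, huw, hi'.1.symm, norm_inversion]
  · have hi' := mt (hx i).2 hi
    have hj' := mt (hx j).2 hj
    push Not at hi' hj'
    rw [EuclideanGeometry.dist_inversion_inversion hi hj]
    simp [hi, hj, hi'.1.symm, hi'.2.symm, hj'.1.symm, hj'.2.symm, mul_pow, mul_comm]

variable [Fintype V]

lemma prod_edgeFinset_mul_map_eq_prod_pow_degree {M : Type*} [CommMonoid M] (G : SimpleGraph V)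
    (N : V → M) : ∏ ed ∈ G.edgeFinset, (ed.map N).mul = ∏ v, N v ^ G.degree v := by
  have mul_map_eq : ∀ ed ∈ G.edgeFinset, (ed.map N).mul = ∏ v, if v ∈ ed then N v else 1 := by
    intro ed hed
    induction ed with | _ i j
    have hij : i ≠ j := (SimpleGraph.mem_edgeFinset.1 hed).ne
    have hfilter : ({v | v ∈ s(i, j)} : Finset V) = {i, j} := by ext; simp
    rw [← Finset.prod_filter, hfilter, Finset.prod_pair hij, Sym2.map_mk, Sym2.mul_mk]
  rw [Finset.prod_congr rfl mul_map_eq, Finset.prod_comm]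
  refine Finset.prod_congr rfl fun v _ => ?_
  rw [← Finset.prod_filter, Finset.prod_const, ← SimpleGraph.incidenceFinset_eq_filter,
    SimpleGraph.card_incidenceFinset_eq_degree]

variable {G : SimpleGraph V} {q : ℕ}

lemma two_mul_card_edgesOff_add (hG : G.IsRegularOfDegree q) (u : V) :
    2 * (edgesOff G u).card + 2 * q = q * Fintype.card V := by
  have card_add : G.degree u + (edgesOff G u).card = G.edgeFinset.card := by
    rw [← SimpleGraph.card_incidenceFinset_eq_degree, SimpleGraph.incidenceFinset_eq_filter]
    exact Finset.card_filter_add_card_filter_not _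
  have handshake := G.sum_degrees_eq_twice_card_edges
  simp only [hG.degree_eq, Finset.sum_const, Finset.card_univ, smul_eq_mul] at handshake card_add
  rw [mul_comm q, handshake, ← card_add]
  ring

/-- Regularity distributes the factors `‖x i‖ ^ 2 * ‖x j‖ ^ 2` produced by the inversion evenly
over the vertices. The edges at `w`, which sits at the origin, are traded for the edges at `u`. -/
lemma propagatorProd_inversion (hG : G.IsRegularOfDegree q) {u w : V} (huw : u ≠ w) {x : V → E}
    (hx : ∀ v, x v = 0 ↔ v = u ∨ v = w) :
    propagatorProd G u (inversion 0 1 ∘ x)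
      = propagatorProd G w x * ∏ v ∈ {u, w}ᶜ, ‖x v‖ ^ (2 * q) := by
  have vertex_factor : ∏ v, (if x v = 0 then 1 else ‖x v‖) ^ q = ∏ v ∈ {u, w}ᶜ, ‖x v‖ ^ q := by
    have hcompl : ({u, w}ᶜ : Finset V) = Finset.univ.filter (x · ≠ 0) := by
      ext v
      simp [hx]
    rw [hcompl, Finset.prod_filter]
    exact Finset.prod_congr rfl fun v _ => by by_cases h : x v = 0 <;> simp [h]
  have hdiag : ∀ ed ∈ G.edgeFinset, ¬ ed.IsDiag := fun ed hed =>
    G.not_isDiag_of_mem_edgeSet (SimpleGraph.mem_edgeFinset.1 hed)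
  rw [propagatorProd, propagatorProd, edgesOff, edgesOff, Finset.prod_filter, Finset.prod_filter,
    Finset.prod_congr rfl fun ed hed => inv_sq_edgeDist_inversion huw hx (hdiag ed hed),
    Finset.prod_mul_distrib, Finset.prod_pow, prod_edgeFinset_mul_map_eq_prod_pow_degree]
  simp only [hG.degree_eq, vertex_factor, mul_comm 2, pow_mul, Finset.prod_pow]

lemma conformalDensity_inversion (hG : G.IsRegularOfDegree q) (hq : q ≠ 0) {u w : V}
    (huw : u ≠ w) {x : V → E} (hx : ∀ v, x v = 0 ↔ v = u ∨ v = w) :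
    conformalDensity G q u (inversion 0 1 ∘ x)
      = conformalDensity G q w x * ∏ v ∈ {u, w}ᶜ, ‖x v‖ ^ (2 * finrank ℝ E) := by
  have hq' : (q : ℝ) ≠ 0 := Nat.cast_ne_zero.2 hq
  have norm_pow_rpow (v : V) :
      (‖x v‖ ^ (2 * q)) ^ (finrank ℝ E / q : ℝ) = ‖x v‖ ^ (2 * finrank ℝ E) := by
    rw [← Real.rpow_natCast, ← Real.rpow_natCast, ← Real.rpow_mul (norm_nonneg _)]
    push_cast
    congr 1
    field_simp
  rw [conformalDensity, conformalDensity, propagatorProd_inversion hG huw hx,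
    Real.mul_rpow (propagatorProd_nonneg _ _ _) (by positivity),
    ← Real.finsetProd_rpow _ _ fun _ _ => by positivity]
  simp only [norm_pow_rpow]

lemma prod_mul_conformalDensity_inversion (hG : G.IsRegularOfDegree q) (hq : q ≠ 0) {u w z : V}
    (huw : u ≠ w) (huz : u ≠ z) (hwz : w ≠ z) {x : V → E} (hx : ∀ v, x v = 0 ↔ v = u ∨ v = w)
    (hz : ‖x z‖ = 1) :
    (∏ v ∈ {u, w, z}ᶜ, (1 / dist (x v) 0) ^ (2 * finrank ℝ E))
      * conformalDensity G q u (inversion 0 1 ∘ x) = conformalDensity G q w x := by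
  have hsplit : ({u, w}ᶜ : Finset V) = insert z {u, w, z}ᶜ := by
    grind [Finset.mem_compl]
  rw [conformalDensity_inversion hG hq huw hx, hsplit, Finset.prod_insert (by simp), hz, one_pow,
    one_mul, mul_left_comm, ← Finset.prod_mul_distrib, Finset.prod_eq_one, mul_one]
  intro v hv
  have hv0 : ‖x v‖ ≠ 0 := by
    rw [norm_ne_zero_iff, Ne, hx]
    grind [Finset.mem_compl]
  rw [dist_zero_right, one_div, inv_pow, inv_mul_cancel₀ (pow_ne_zero _ hv0)]

lemma propagatorProd_smul (u : V) (r : ℝ) (x : V → E) :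
    propagatorProd G u (r • x) = (r ^ 2)⁻¹ ^ (edgesOff G u).card * propagatorProd G u x := by
  rw [propagatorProd, propagatorProd, ← Finset.prod_const, ← Finset.prod_mul_distrib]
  refine Finset.prod_congr rfl fun ed _ => ?_
  induction ed with | _ i j
  rw [edgeDist_mk, edgeDist_mk, Pi.smul_apply, Pi.smul_apply, dist_smul₀, mul_pow, mul_inv,
    Real.norm_eq_abs, sq_abs]

lemma pow_mul_conformalDensity_smul (hG : G.IsRegularOfDegree q) (hq : q ≠ 0) (u : V) {r : ℝ}
    (hr : 0 < r) {n : ℕ} (hn : n + 2 = Fintype.card V) (x : V → E) :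
    (r ^ finrank ℝ E) ^ n * conformalDensity G q u (r • x) = conformalDensity G q u x := by
  have hcard : (2 * (edgesOff G u).card : ℝ) = q * n := by
    have h := two_mul_card_edgesOff_add hG u
    rw [← hn] at h
    have h' : 2 * (edgesOff G u).card = q * n := by linarith
    exact_mod_cast h'
  have scale_factor : ((r ^ 2)⁻¹ ^ (edgesOff G u).card) ^ (finrank ℝ E / q : ℝ)
      = ((r ^ finrank ℝ E) ^ n)⁻¹ := by
    have hq' : (q : ℝ) ≠ 0 := Nat.cast_ne_zero.2 hq
    rw [inv_pow, ← pow_mul, ← pow_mul, Real.inv_rpow (by positivity), ← Real.rpow_natCast,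
      ← Real.rpow_natCast, ← Real.rpow_mul hr.le]
    push_cast
    rw [hcard]
    congr 2
    field_simp
  rw [conformalDensity, propagatorProd_smul,
    Real.mul_rpow (by positivity) (propagatorProd_nonneg _ _ _), scale_factor,
    mul_inv_cancel_left₀ (by positivity), conformalDensity]

variable [FiniteDimensional ℝ E] [MeasurableSpace E] [BorelSpace E]

lemma ae_injOn_compl_updateFinset_single {u w z : V} [Nontrivial E] (hwz : w ≠ z) {e : E}
    (he : e ≠ 0) :
    ∀ᵐ x ∂Measure.pi fun _ : ({u, w, z}ᶜ : Finset V) => (volume : Measure E),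
      Set.InjOn (Function.updateFinset (Pi.single z e) {u, w, z}ᶜ x) {u}ᶜ := by
  refine ae_injOn_updateFinset fun i hi j hj hij => ?_
  simp only [Set.mem_sdiff, Set.mem_compl_iff, Set.mem_singleton_iff, Finset.mem_coe,
    Finset.mem_compl, Finset.mem_insert, not_not] at hi hj
  grind

/-- Inversion in the unit sphere exchanges the vertex at the origin with the one at infinity. -/
lemma periodLIntegral_swap_infinity_origin [Nontrivial E] (hG : G.IsRegularOfDegree q)
    (hq : q ≠ 0) {u w z : V} (huw : u ≠ w) (huz : u ≠ z) (hwz : w ≠ z) {e : E} (he : ‖e‖ = 1) :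
    periodLIntegral G q u w z e = periodLIntegral G q w u z e := by
  have inversion_e : inversion 0 1 e = e :=
    EuclideanGeometry.inversion_of_mem_sphere (by simpa using he)
  have he0 : e ≠ 0 := by rintro rfl; simp at he
  have hs : ({w, u, z} : Finset V) = {u, w, z} := Finset.insert_comm _ _ _
  rw [periodLIntegral_eq_lmarginal hwz (y := inversion 0 1 ∘ Pi.single z e) (by simp [hwz])
      (by simp [inversion_e]),
    lmarginal_comp_eq_lmarginal_prod_mul (measurable_inversion 0 1) (by fun_prop)
      (map_inversion_withDensity 0 one_ne_zero) (by fun_prop), periodLIntegral, hs]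
  refine lintegral_congr_ae ?_
  filter_upwards [ae_injOn_compl_updateFinset_single (u := u) hwz he0] with t ht
  set x : V → E := Function.updateFinset (Pi.single z e) {u, w, z}ᶜ t
  have hxu : x u = 0 := by simp [x, Function.updateFinset, huz]
  have hxw : x w = 0 := by simp [x, Function.updateFinset, hwz]
  have hxz : x z = e := by simp [x, Function.updateFinset]
  have hx (v : V) : x v = 0 ↔ v = u ∨ v = w := by
    refine ⟨fun hv => or_iff_not_imp_left.2 fun hvu => ?_, by rintro (rfl | rfl) <;> assumption⟩
    exact ht hvu huw.symm (hv.trans hxw.symm)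
  rw [← ENNReal.ofReal_prod_of_nonneg (fun _ _ => by positivity),
    ← ENNReal.ofReal_mul (by positivity),
    prod_mul_conformalDensity_inversion hG hq huw huz hwz hx (by rw [hxz, he])]

lemma sq_mul_lmarginal_conformalDensity_smul (hG : G.IsRegularOfDegree q) (hq : q ≠ 0) (u : V)
    {s : Finset V} (hs : s.card + 4 = Fintype.card V) {r : ℝ} (hr : 0 < r) (y : V → E) :
    ENNReal.ofReal (r ^ finrank ℝ E) ^ 2
        * (∫⋯∫⁻_s, fun x => ENNReal.ofReal (conformalDensity G q u x)) (r • y)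
      = (∫⋯∫⁻_s, fun x => ENNReal.ofReal (conformalDensity G q u x)) y := by
  have change_of_variables := lmarginal_comp_eq_lmarginal_prod_mul (measurable_const_smul r)
    measurable_const (map_smul_withDensity (E := E) hr)
    (measurable_conformalDensity G q u).ennreal_ofReal s y
  rw [show r • y = (r • ·) ∘ y from rfl, change_of_variables, lmarginal, lmarginal]
  refine (lintegral_const_mul' _ _ (by finiteness)).symm.trans (lintegral_congr fun t => ?_)
  rw [Finset.prod_const, ← mul_assoc, ← pow_add, ← ENNReal.ofReal_pow (by positivity),
    ← ENNReal.ofReal_mul (by positivity)]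
  exact congrArg ENNReal.ofReal (pow_mul_conformalDensity_smul hG hq u hr (by omega) _)

variable (G q) in
/-- The period integral with a second vertex `z'` pinned, as a function of the positions `a` of
`z` and `b` of `z'`. -/
noncomputable def twoPointLIntegral (u w z z' : V) (a b : E) : ℝ≥0∞ :=
  (∫⋯∫⁻_({u, w, z, z'}ᶜ : Finset V), fun y => ENNReal.ofReal (conformalDensity G q u y))
    (Function.update (Pi.single z a) z' b)

lemma twoPointLIntegral_swap {u w z z' : V} (hzz' : z ≠ z') (a b : E) :
    twoPointLIntegral G q u w z z' a b = twoPointLIntegral G q u w z' z b a := by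
  rw [twoPointLIntegral, twoPointLIntegral, Pi.single, Pi.single, Function.update_comm hzz',
    Finset.pair_comm z z']

lemma periodLIntegral_eq_lintegral_twoPointLIntegral {u w z z' : V} (huz' : u ≠ z') (hwz' : w ≠ z')
    (hzz' : z ≠ z') (e : E) :
    periodLIntegral G q u w z e = ∫⁻ b, twoPointLIntegral G q u w z z' e b := by
  have hinsert : ({u, w, z}ᶜ : Finset V) = insert z' {u, w, z, z'}ᶜ := by
    grind [Finset.mem_compl]
  rw [periodLIntegral, hinsert, lmarginal_insert _ (by fun_prop) (by simp)]
  rfl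

lemma twoPointLIntegral_linearIsometryEquiv (A : E ≃ₗᵢ[ℝ] E) (u w z z' : V) (a b : E) :
    twoPointLIntegral G q u w z z' (A a) (A b) = twoPointLIntegral G q u w z z' a b := by
  have comp_single : A ∘ Pi.single z a = Pi.single z (A a) :=
    funext (Pi.apply_single (fun _ => A) (fun _ => map_zero A) z a)
  rw [twoPointLIntegral, ← comp_single, ← Function.comp_update,
    lmarginal_conformalDensity_isometry A.isometry A.measurePreserving,
    twoPointLIntegral]

lemma sq_mul_twoPointLIntegral_smul (hG : G.IsRegularOfDegree q) (hq : q ≠ 0) {u w z z' : V}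
    (hcard : ({u, w, z, z'} : Finset V).card = 4) {r : ℝ} (hr : 0 < r) (a b : E) :
    ENNReal.ofReal (r ^ finrank ℝ E) ^ 2 * twoPointLIntegral G q u w z z' (r • a) (r • b)
      = twoPointLIntegral G q u w z z' a b := by
  have hs : ({u, w, z, z'}ᶜ : Finset V).card + 4 = Fintype.card V := by
    rw [← hcard, Finset.card_compl_add_card]
  rw [twoPointLIntegral, Pi.single_smul, Function.update_smul,
    sq_mul_lmarginal_conformalDensity_smul hG hq u hs hr, twoPointLIntegral]

/-- A scaling followed by a reflection takes the pair `(e, b)` to `(inversion 0 1 b, e)`. -/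
lemma twoPointLIntegral_eq_mul_inversion (hG : G.IsRegularOfDegree q) (hq : q ≠ 0) {u w z z' : V}
    (hcard : ({u, w, z, z'} : Finset V).card = 4) {e b : E} (he : ‖e‖ = 1) (hb : b ≠ 0) :
    twoPointLIntegral G q u w z z' e b = ENNReal.ofReal ((1 / dist b 0) ^ (2 * finrank ℝ E))
      * twoPointLIntegral G q u w z z' (inversion 0 1 b) e := by
  have hb' : 0 < ‖b‖⁻¹ := inv_pos.2 (norm_pos_iff.2 hb)
  set A := (ℝ ∙ (e - ‖b‖⁻¹ • b))ᗮ.reflection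
  have reflect_e : A e = ‖b‖⁻¹ • b := Submodule.reflection_sub (by
    rw [he, norm_smul, norm_inv, norm_norm, inv_mul_cancel₀ (norm_ne_zero_iff.2 hb)])
  have reflect_b : A (‖b‖⁻¹ • b) = e := by rw [← reflect_e, Submodule.reflection_reflection]
  have inversion_b : inversion 0 1 b = ‖b‖⁻¹ • ‖b‖⁻¹ • b := by
    simp [EuclideanGeometry.inversion, smul_smul, sq]
  rw [← sq_mul_twoPointLIntegral_smul hG hq hcard hb', ← twoPointLIntegral_linearIsometryEquiv A,
    reflect_b, map_smul, reflect_e, ← inversion_b, ← ENNReal.ofReal_pow (by positivity), ← pow_mul,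
    mul_comm 2, dist_zero_right, one_div]

lemma periodLIntegral_replace_unit [Nontrivial E] (hG : G.IsRegularOfDegree q) (hq : q ≠ 0)
    {u w z z' : V} (huw : u ≠ w) (huz : u ≠ z) (hwz : w ≠ z) (huz' : u ≠ z') (hwz' : w ≠ z')
    {e : E} (he : ‖e‖ = 1) :
    periodLIntegral G q u w z e = periodLIntegral G q u w z' e := by
  obtain rfl | hzz' := eq_or_ne z z'
  · rfl
  have hcard : ({u, w, z, z'} : Finset V).card = 4 := by
    rw [Finset.card_insert_of_notMem, Finset.card_insert_of_notMem, Finset.card_pair hzz'] <;>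
      simp [*]
  have hmeas : Measurable fun a : E => twoPointLIntegral G q u w z' z e a := by
    exact ((measurable_conformalDensity G q u).ennreal_ofReal.lmarginal _).comp
      (measurable_update _)
  rw [periodLIntegral_eq_lintegral_twoPointLIntegral huz' hwz' hzz',
    periodLIntegral_eq_lintegral_twoPointLIntegral huz hwz hzz'.symm,
    lintegral_eq_lintegral_mul_comp (measurable_inversion 0 1) (by fun_prop)
      (map_inversion_withDensity 0 one_ne_zero) hmeas]
  refine lintegral_congr_ae ?_
  filter_upwards [volume.ae_ne 0] with b hb
  rw [twoPointLIntegral_eq_mul_inversion hG hq hcard he hb, twoPointLIntegral_swap hzz']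

lemma periodLIntegral_replace_origin_unit [Nontrivial E] (hG : G.IsRegularOfDegree q)
    (hq : q ≠ 0) {u w z w' z' : V} (huw : u ≠ w) (huz : u ≠ z) (hwz : w ≠ z) (huw' : u ≠ w')
    (huz' : u ≠ z') (hwz' : w' ≠ z') {e : E} (he : ‖e‖ = 1) :
    periodLIntegral G q u w z e = periodLIntegral G q u w' z' e := by
  obtain rfl | hwz'' := eq_or_ne w z'
  · rw [periodLIntegral_replace_unit hG hq huw huz hwz huw' hwz'.symm he,
      periodLIntegral_swap_origin_unit e hwz'.symm]
  · rw [periodLIntegral_replace_unit hG hq huw huz hwz huz' hwz'' he,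
      periodLIntegral_swap_origin_unit e hwz'',
      periodLIntegral_replace_unit hG hq huz' huw hwz''.symm huw' hwz'.symm he,
      periodLIntegral_swap_origin_unit e hwz'.symm]

theorem periodLIntegral_eq_periodLIntegral (hG : G.IsRegularOfDegree q) (hq : q ≠ 0)
    {u w z u' w' z' : V} (huw : u ≠ w) (huz : u ≠ z) (hwz : w ≠ z) (huw' : u' ≠ w')
    (huz' : u' ≠ z') (hwz' : w' ≠ z') {e e' : E} (he : ‖e‖ = 1) (he' : ‖e'‖ = 1) :
    periodLIntegral G q u w z e = periodLIntegral G q u' w' z' e' := by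
  have : Nontrivial E := nontrivial_of_ne e 0 (norm_ne_zero_iff.1 (he ▸ one_ne_zero))
  rw [periodLIntegral_eq_of_norm_eq hwz' (he'.trans he.symm)]
  obtain rfl | huu' := eq_or_ne u u'
  · exact periodLIntegral_replace_origin_unit hG hq huw huz hwz huw' huz' hwz' he
  obtain ⟨t, htu, htu'⟩ : ∃ t, u ≠ t ∧ u' ≠ t := by
    obtain rfl | h := eq_or_ne u' w
    exacts [⟨z, huz, hwz⟩, ⟨w, huw, h⟩]
  rw [periodLIntegral_replace_origin_unit hG hq huw huz hwz huu' htu htu' he,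
    periodLIntegral_swap_infinity_origin hG hq huu' htu htu' he,
    periodLIntegral_replace_origin_unit hG hq huu'.symm htu' htu huw' huz' hwz' he]

end Conformal

/-! ### Primitive graphs and clusterings -/

section Clustering

variable {V : Type*} [Fintype V] {G : SimpleGraph V} {q : ℕ}

/-- A `q`-regular graph whose edge cuts of size at most `q` all isolate at most one vertex. For
`q = 4` and nonempty `V` these are the completed primitive graphs. -/
structure IsPrimitiveOfDegree (G : SimpleGraph V) (q : ℕ) : Prop where
  isRegularOfDegree : G.IsRegularOfDegree q
  lt_card_cutEdges : ∀ A : Finset V, 2 ≤ A.card → 2 ≤ Aᶜ.card → q < (cutEdges G A).card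

lemma CompletedPrimitive.isPrimitiveOfDegree (hG : CompletedPrimitive G) :
    IsPrimitiveOfDegree G 4 :=
  ⟨hG.1, hG.2.2.2⟩

variable (G) in
/-- The edges of `G` with both ends in `A`. -/
noncomputable def insideEdges (A : Finset V) : Finset (Sym2 V) :=
  {ed ∈ G.edgeFinset | ∀ v ∈ ed, v ∈ A}

variable (G) in
lemma sum_degree_eq_two_mul_card_insideEdges_add (A : Finset V) :
    ∑ v ∈ A, G.degree v = 2 * (insideEdges G A).card + (cutEdges G A).card := by
  have card_ends : ∀ ed ∈ G.edgeFinset, (A.filter (· ∈ ed)).card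
      = 2 * (if ∀ v ∈ ed, v ∈ A then 1 else 0)
        + (if ∃ x, x ∈ ed ∧ x ∈ A ∧ ∃ y, y ∈ ed ∧ y ∉ A then 1 else 0) := by
    intro ed hed
    induction ed with | _ i j
    have hij : i ≠ j := (SimpleGraph.mem_edgeFinset.1 hed).ne
    have hfilter : A.filter (· ∈ s(i, j)) = ({i, j} : Finset V).filter (· ∈ A) := by grind
    rw [hfilter, Finset.filter_insert, Finset.filter_singleton]
    by_cases hi : i ∈ A <;> by_cases hj : j ∈ A <;> simp [hi, hj, hij]
  calc ∑ v ∈ A, G.degree v = ∑ v ∈ A, (G.edgeFinset.filter (v ∈ ·)).card := by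
        simp_rw [← SimpleGraph.card_incidenceFinset_eq_degree,
          SimpleGraph.incidenceFinset_eq_filter]
    _ = ∑ ed ∈ G.edgeFinset, (A.filter (· ∈ ed)).card :=
        Finset.sum_card_bipartiteAbove_eq_sum_card_bipartiteBelow _
    _ = 2 * (insideEdges G A).card + (cutEdges G A).card := by
        rw [Finset.sum_congr rfl card_ends, Finset.sum_add_distrib, ← Finset.mul_sum,
          ← Finset.card_filter, ← Finset.card_filter, insideEdges, cutEdges]

lemma IsPrimitiveOfDegree.two_mul_card_insideEdges_add_lt (hG : IsPrimitiveOfDegree G q)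
    {A : Finset V} (hA : 2 ≤ A.card) (hA' : 2 ≤ Aᶜ.card) :
    2 * (insideEdges G A).card + q < q * A.card := by
  have degree_sum := sum_degree_eq_two_mul_card_insideEdges_add G A
  simp only [hG.isRegularOfDegree.degree_eq, Finset.sum_const, smul_eq_mul] at degree_sum
  linarith [hG.lt_card_cutEdges A hA hA']

lemma insideEdges_singleton (a : V) : insideEdges G {a} = ∅ := by
  refine Finset.filter_false_of_mem fun ed hed h => ?_
  induction ed with | _ i j
  simp only [Sym2.mem_iff, Finset.mem_singleton, forall_eq_or_imp, forall_eq] at h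
  exact (SimpleGraph.mem_edgeFinset.1 hed).ne (h.1.trans h.2.symm)

lemma IsPrimitiveOfDegree.two_mul_card_insideEdges_add_le (hG : IsPrimitiveOfDegree G q)
    {A : Finset V} (hA : A.Nonempty) (hA' : 2 ≤ Aᶜ.card) :
    2 * (insideEdges G A).card + q ≤ q * A.card := by
  obtain ⟨a, rfl⟩ | h := hA.exists_eq_singleton_or_nontrivial
  · simp [insideEdges_singleton]
  · exact (hG.two_mul_card_insideEdges_add_lt (Finset.one_lt_card_iff_nontrivial.2 h) hA').le

/-- The vertices other than `u` are grouped into clusters; `S` is a set of representatives and `c`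
sends each vertex to the representative of its cluster. -/
structure IsClustering (u : V) (S : Finset V) (c : V → V) : Prop where
  notMem : u ∉ S
  map_mem : ∀ v, v ≠ u → c v ∈ S
  map_eq : ∀ a ∈ S, c a = a

lemma isClustering_id (u : V) : IsClustering u (Finset.univ.erase u) id :=
  ⟨Finset.notMem_erase u _, fun _ hv => Finset.mem_erase.2 ⟨hv, Finset.mem_univ _⟩, fun _ _ => rfl⟩

variable (G) in
/-- The edges off `u` that join two vertices of the same cluster. -/
noncomputable def innerEdges (u : V) (c : V → V) : Finset (Sym2 V) :=
  {ed ∈ edgesOff G u | (ed.map c).IsDiag}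

variable (G q) in
/-- Twice the number of inner edges of a clustering, normalized so that it equals `q * card V` both
for the clustering into single vertices and for the one with a single cluster. -/
noncomputable def clusterDegree (u : V) (S : Finset V) (c : V → V) : ℕ :=
  2 * (innerEdges G u c).card + q * (S.card + 1)

/-- The cluster with representative `a`. -/
noncomputable def clusterAt (u : V) (c : V → V) (a : V) : Finset V :=
  {v ∈ Finset.univ.erase u | c v = a}

lemma mem_clusterAt {u a v : V} {c : V → V} : v ∈ clusterAt u c a ↔ v ≠ u ∧ c v = a := by
  simp [clusterAt]

namespace IsClustering

variable {u : V} {S : Finset V} {c : V → V}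

lemma sum_card_clusterAt (hc : IsClustering u S c) :
    ∑ a ∈ S, (clusterAt u c a).card + 1 = Fintype.card V := by
  have hfiber := Finset.card_eq_sum_card_fiberwise (s := Finset.univ.erase u) (t := S) (f := c)
    fun v hv => hc.map_mem v (by simpa using hv)
  rw [← Finset.card_univ, ← Finset.card_erase_add_one (Finset.mem_univ u), hfiber]
  rfl

lemma card_innerEdges_le (hc : IsClustering u S c) :
    (innerEdges G u c).card ≤ ∑ a ∈ S, (insideEdges G (clusterAt u c a)).card := by
  refine (Finset.card_le_card fun ed hed => ?_).trans Finset.card_biUnion_le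
  obtain ⟨hed, hdiag⟩ := Finset.mem_filter.1 hed
  obtain ⟨hed, hu⟩ := Finset.mem_filter.1 hed
  induction ed with | _ i j
  simp only [Sym2.mem_iff, not_or] at hu
  simp only [Sym2.map_mk, Sym2.mk_isDiag_iff] at hdiag
  refine Finset.mem_biUnion.2 ⟨c i, hc.map_mem i (Ne.symm hu.1), Finset.mem_filter.2 ⟨hed, ?_⟩⟩
  simp only [Sym2.mem_iff, forall_eq_or_imp, forall_eq, mem_clusterAt]
  exact ⟨⟨Ne.symm hu.1, trivial⟩, Ne.symm hu.2, hdiag.symm⟩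

lemma mem_clusterAt_self (hc : IsClustering u S c) {a : V} (ha : a ∈ S) : a ∈ clusterAt u c a :=
  mem_clusterAt.2 ⟨ne_of_mem_of_not_mem ha hc.notMem, hc.map_eq a ha⟩

lemma two_le_card_compl_clusterAt (hc : IsClustering u S c) (hS : 2 ≤ S.card) (a : V) :
    2 ≤ (clusterAt u c a)ᶜ.card := by
  obtain ⟨b, hb, hba⟩ := Finset.exists_mem_ne hS a
  refine Finset.one_lt_card.2 ⟨u, ?_, b, ?_, (ne_of_mem_of_not_mem hb hc.notMem).symm⟩
  · simp [mem_clusterAt]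
  · simp [mem_clusterAt, hc.map_eq b hb, hba]

lemma exists_two_le_card_clusterAt (hc : IsClustering u S c) (hS : S.card + 1 < Fintype.card V) :
    ∃ a ∈ S, 2 ≤ (clusterAt u c a).card := by
  by_contra! hcon
  have card_sum := Finset.sum_le_card_nsmul S _ 1 fun a ha => Nat.le_of_lt_succ (hcon a ha)
  have := hc.sum_card_clusterAt
  rw [smul_eq_mul] at card_sum
  omega

lemma clusterDegree_lt (hG : IsPrimitiveOfDegree G q) (hc : IsClustering u S c)
    (hS : 2 ≤ S.card) (hS' : S.card + 1 < Fintype.card V) :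
    clusterDegree G q u S c < q * Fintype.card V := by
  obtain ⟨b, hb, hb2⟩ := hc.exists_two_le_card_clusterAt hS'
  have inside_lt : ∑ a ∈ S, (2 * (insideEdges G (clusterAt u c a)).card + q)
      < ∑ a ∈ S, q * (clusterAt u c a).card :=
    Finset.sum_lt_sum
      (fun a ha => hG.two_mul_card_insideEdges_add_le ⟨a, hc.mem_clusterAt_self ha⟩
        (hc.two_le_card_compl_clusterAt hS a))
      ⟨b, hb, hG.two_mul_card_insideEdges_add_lt hb2 (hc.two_le_card_compl_clusterAt hS b)⟩
  rw [Finset.sum_add_distrib, ← Finset.mul_sum, ← Finset.mul_sum, Finset.sum_const,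
    smul_eq_mul] at inside_lt
  have := hc.card_innerEdges_le (G := G)
  rw [clusterDegree, ← hc.sum_card_clusterAt]
  linarith

lemma map_isDiag_of_card_eq_one (hc : IsClustering u S c) (hS : S.card = 1) {ed : Sym2 V}
    (hed : ed ∈ edgesOff G u) : (ed.map c).IsDiag := by
  obtain ⟨a, rfl⟩ := Finset.card_eq_one.1 hS
  have hu := (Finset.mem_filter.1 hed).2
  induction ed with | _ i j
  simp only [Sym2.mem_iff, not_or] at hu
  rw [Sym2.map_mk, Sym2.mk_isDiag_iff, Finset.mem_singleton.1 (hc.map_mem i (Ne.symm hu.1)),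
    Finset.mem_singleton.1 (hc.map_mem j (Ne.symm hu.2))]

lemma clusterDegree_of_card_eq_one (hG : G.IsRegularOfDegree q) (hc : IsClustering u S c)
    (hS : S.card = 1) : clusterDegree G q u S c = q * Fintype.card V := by
  rw [clusterDegree, innerEdges,
    Finset.filter_true_of_mem fun _ => hc.map_isDiag_of_card_eq_one hS, hS,
    ← two_mul_card_edgesOff_add hG u]
  ring

end IsClustering

lemma not_isDiag_of_mem_edgesOff {u : V} {ed : Sym2 V} (hed : ed ∈ edgesOff G u) : ¬ ed.IsDiag :=
  G.not_isDiag_of_mem_edgeSet (SimpleGraph.mem_edgeFinset.1 (Finset.mem_filter.1 hed).1)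

lemma clusterDegree_id (u : V) :
    clusterDegree G q u (Finset.univ.erase u) id = q * Fintype.card V := by
  have hinner : innerEdges G u id = ∅ :=
    Finset.filter_false_of_mem fun ed hed => by simpa using not_isDiag_of_mem_edgesOff hed
  rw [clusterDegree, hinner, Finset.card_erase_add_one (Finset.mem_univ u), Finset.card_univ,
    Finset.card_empty, mul_zero, zero_add]

end Clustering

/-! ### Greedy clustering -/

section Greedy

variable {V X : Type*}

/-- The clustering obtained from `c` by absorbing the cluster of `j` into the cluster of `i`. -/
noncomputable def absorb (c : V → V) (i j v : V) : V := if c v = j then i else c v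

lemma map_absorb_isDiag_iff (c : V → V) (i j : V) (ed : Sym2 V) :
    (ed.map (absorb c i j)).IsDiag ↔ (ed.map c).IsDiag ∨ ed.map c = s(i, j) := by
  induction ed with | _ a b
  simp only [Sym2.map_mk, Sym2.mk_isDiag_iff, absorb, Sym2.eq_iff]
  grind

lemma exists_closest_pair [PseudoMetricSpace X] {α : Type*} [LinearOrder α] {h : V → α}
    (hh : Function.Injective h) {w : V} (hw : ∀ v, v ≠ w → h v < h w) (x : V → X) {S : Finset V}
    (hS : 2 ≤ S.card) :
    ∃ i ∈ S, ∃ j ∈ S, i ≠ j ∧ j ≠ w ∧ h j < h i ∧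
      ∀ a ∈ S, ∀ b ∈ S, a ≠ b → dist (x i) (x j) ≤ dist (x a) (x b) := by
  obtain ⟨a, ha, b, hb, hab⟩ := Finset.one_lt_card.1 hS
  obtain ⟨⟨i, j⟩, hmem, hmin⟩ := S.offDiag.exists_min_image (fun t => dist (x t.1) (x t.2))
    ⟨(a, b), Finset.mem_offDiag.2 ⟨ha, hb, hab⟩⟩
  obtain ⟨hi, hj, hij⟩ := Finset.mem_offDiag.1 hmem
  have hmin' : ∀ a ∈ S, ∀ b ∈ S, a ≠ b → dist (x i) (x j) ≤ dist (x a) (x b) :=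
    fun a ha b hb hab => hmin (a, b) (Finset.mem_offDiag.2 ⟨ha, hb, hab⟩)
  have ne_root {k l : V} (hkl : k ≠ l) (hlt : h l < h k) : l ≠ w := by
    rintro rfl
    exact (hw k hkl).not_gt hlt
  obtain hlt | hlt := lt_or_gt_of_ne (hh.ne hij)
  · exact ⟨j, hj, i, hi, hij.symm, ne_root hij.symm hlt, hlt,
      by simpa only [dist_comm (x j)] using hmin'⟩
  · exact ⟨i, hi, j, hj, hij, ne_root hij hlt, hlt, hmin'⟩

lemma dist_absorb_le [PseudoMetricSpace X] {x : V → X} {c : V → V} {i j a b : V}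
    (hab : dist (x i) (x j) ≤ dist (x (c a)) (x (c b))) :
    dist (x (absorb c i j a)) (x (absorb c i j b)) ≤ 2 * dist (x (c a)) (x (c b)) := by
  unfold absorb
  split_ifs with ha hb hb
  · simp
  · rw [ha] at hab ⊢
    linarith [dist_triangle (x i) (x j) (x (c b))]
  · rw [hb] at hab ⊢
    linarith [dist_triangle (x (c a)) (x j) (x i), dist_comm (x i) (x j)]
  · linarith [dist_nonneg (x := x (c a)) (y := x (c b))]

lemma IsClustering.erase_absorb {u : V} {S : Finset V} {c : V → V} (hc : IsClustering u S c)
    {i j : V} (hi : i ∈ S) (hij : i ≠ j) : IsClustering u (S.erase j) (absorb c i j) where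
  notMem hu := hc.notMem (Finset.mem_of_mem_erase hu)
  map_mem v hv := by
    unfold absorb
    split_ifs with h
    exacts [Finset.mem_erase.2 ⟨hij, hi⟩, Finset.mem_erase.2 ⟨h, hc.map_mem v hv⟩]
  map_eq a ha := by
    obtain ⟨haj, haS⟩ := Finset.mem_erase.1 ha
    simp [absorb, hc.map_eq a haS, haj]

/-- `p` arranges the points of `S` into a tree with root `w`, with ranks `h` increasing towards the
root and with edges of length at most `R` in the configuration `x`. -/
structure IsParentMap [PseudoMetricSpace X] {α : Type*} [LinearOrder α] (h : V → α)
    (x : V → X) (R : ℝ) (w : V) (S : Finset V) (p : V → V) : Prop where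
  map_mem : ∀ v ∈ S.erase w, p v ∈ S
  lt_map : ∀ v ∈ S.erase w, h v < h (p v)
  dist_le : ∀ v ∈ S.erase w, dist (x v) (x (p v)) ≤ R

lemma IsParentMap.update [PseudoMetricSpace X] {α : Type*} [LinearOrder α] {h : V → α} {x : V → X}
    {R : ℝ} {w i j : V} {S : Finset V} {p : V → V} (hp : IsParentMap h x R w (S.erase j) p)
    (hi : i ∈ S) (hji : h j < h i) (hR : dist (x i) (x j) ≤ R) :
    IsParentMap h x R w S (Function.update p j i) := by
  have mem_erase {v : V} (hv : v ∈ S.erase w) (hvj : v ≠ j) : v ∈ (S.erase j).erase w := by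
    rw [Finset.erase_right_comm]
    exact Finset.mem_erase.2 ⟨hvj, hv⟩
  refine ⟨fun v hv => ?_, fun v hv => ?_, fun v hv => ?_⟩ <;>
    obtain rfl | hvj := eq_or_ne v j
  · rwa [Function.update_self]
  · rw [Function.update_of_ne hvj]
    exact Finset.mem_of_mem_erase (hp.map_mem v (mem_erase hv hvj))
  · rwa [Function.update_self]
  · rw [Function.update_of_ne hvj]
    exact hp.lt_map v (mem_erase hv hvj)
  · rwa [Function.update_self, dist_comm]
  · rw [Function.update_of_ne hvj]
    exact hp.dist_le v (mem_erase hv hvj)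

lemma prod_erase_dist_update_pow [PseudoMetricSpace X] (x : V → X) (p : V → V) {w j : V} (i : V)
    {S : Finset V} (hj : j ∈ S) (hjw : j ≠ w) (q : ℕ) :
    ∏ v ∈ S.erase w, dist (x v) (x (Function.update p j i v)) ^ q
      = dist (x i) (x j) ^ q * ∏ v ∈ (S.erase j).erase w, dist (x v) (x (p v)) ^ q := by
  rw [← Finset.mul_prod_erase (S.erase w) _ (Finset.mem_erase.2 ⟨hjw, hj⟩), Function.update_self,
    dist_comm, Finset.erase_right_comm]
  congr 1
  refine Finset.prod_congr rfl fun v hv => ?_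
  rw [Function.update_of_ne (Finset.ne_of_mem_erase (Finset.mem_of_mem_erase hv))]

variable [Fintype V] (G : SimpleGraph V) (q : ℕ) (u : V)

/-- The edges off `u` that join the clusters of `i` and `j`. -/
noncomputable def joiningEdges (c : V → V) (i j : V) : Finset (Sym2 V) :=
  {ed ∈ edgesOff G u | ed.map c = s(i, j)}

/-- The propagators of the edges between different clusters, every vertex being moved to the
position of the representative of its cluster. -/
noncomputable def outerProd [PseudoMetricSpace X] (x : V → X) (c : V → V) : ℝ :=
  ∏ ed ∈ edgesOff G u with ¬ (ed.map c).IsDiag, (edgeDist x (ed.map c) ^ 2)⁻¹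

variable {G q u}

lemma outerProd_nonneg [PseudoMetricSpace X] (x : V → X) (c : V → V) : 0 ≤ outerProd G u x c :=
  Finset.prod_nonneg fun _ _ => by positivity

lemma outerProd_id [PseudoMetricSpace X] (x : V → X) :
    outerProd G u x id = propagatorProd G u x := by
  rw [outerProd, propagatorProd, Finset.filter_true_of_mem fun ed hed => by
    simpa using not_isDiag_of_mem_edgesOff hed]
  exact Finset.prod_congr rfl fun ed _ => by rw [Sym2.map_id, id_eq]

lemma outerProd_of_card_eq_one [PseudoMetricSpace X] (x : V → X) {S : Finset V} {c : V → V}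
    (hc : IsClustering u S c) (hS : S.card = 1) : outerProd G u x c = 1 := by
  rw [outerProd, Finset.filter_false_of_mem fun ed hed => not_not.2
    (hc.map_isDiag_of_card_eq_one hS hed), Finset.prod_empty]

lemma card_innerEdges_absorb (c : V → V) {i j : V} (hij : i ≠ j) :
    (innerEdges G u (absorb c i j)).card
      = (innerEdges G u c).card + (joiningEdges G u c i j).card := by
  rw [innerEdges, innerEdges, joiningEdges, ← Finset.card_union_of_disjoint, ← Finset.filter_or]
  · simp only [map_absorb_isDiag_iff]
  · refine Finset.disjoint_filter.2 fun ed _ hdiag hed => hij ?_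
    rwa [hed, Sym2.mk_isDiag_iff] at hdiag

lemma clusterDegree_absorb {S : Finset V} (c : V → V) {i j : V} (hij : i ≠ j) (hj : j ∈ S) :
    clusterDegree G q u (S.erase j) (absorb c i j) + q
      = clusterDegree G q u S c + 2 * (joiningEdges G u c i j).card := by
  rw [clusterDegree, clusterDegree, card_innerEdges_absorb c hij, ← Finset.card_erase_add_one hj]
  ring

lemma outerProd_eq_mul_prod [PseudoMetricSpace X] (x : V → X) (c : V → V) {i j : V}
    (hij : i ≠ j) :
    outerProd G u x c = ((dist (x i) (x j) ^ 2)⁻¹) ^ (joiningEdges G u c i j).card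
      * ∏ ed ∈ edgesOff G u with ¬ (ed.map (absorb c i j)).IsDiag,
          (edgeDist x (ed.map c) ^ 2)⁻¹ := by
  have hsplit : (edgesOff G u).filter (fun ed => ¬ (ed.map c).IsDiag) = joiningEdges G u c i j
      ∪ (edgesOff G u).filter (fun ed => ¬ (ed.map (absorb c i j)).IsDiag) := by
    rw [joiningEdges, ← Finset.filter_or]
    refine Finset.filter_congr fun ed _ => ?_
    rw [map_absorb_isDiag_iff]
    by_cases hed : ed.map c = s(i, j) <;> simp [hed, hij]
  have hdisj : Disjoint (joiningEdges G u c i j)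
      ((edgesOff G u).filter fun ed => ¬ (ed.map (absorb c i j)).IsDiag) :=
    Finset.disjoint_filter.2 fun ed _ hed hdiag =>
      hdiag ((map_absorb_isDiag_iff c i j ed).2 (Or.inr hed))
  rw [outerProd, hsplit, Finset.prod_union hdisj, ← Finset.prod_const]
  congr 1
  refine Finset.prod_congr rfl fun ed hed => ?_
  rw [(Finset.mem_filter.1 hed).2, edgeDist_mk]

lemma inv_sq_edgeDist_map_le [MetricSpace X] {x : V → X} {S : Finset V} {c : V → V}
    (hc : IsClustering u S c) (hx : Set.InjOn x S) {i j : V} (hi : i ∈ S) (hij : i ≠ j)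
    (hmin : ∀ a ∈ S, ∀ b ∈ S, a ≠ b → dist (x i) (x j) ≤ dist (x a) (x b)) {ed : Sym2 V}
    (hed : ed ∈ edgesOff G u) (hout : ¬ (ed.map (absorb c i j)).IsDiag) :
    (edgeDist x (ed.map c) ^ 2)⁻¹ ≤ 4 * (edgeDist x (ed.map (absorb c i j)) ^ 2)⁻¹ := by
  have hu := (Finset.mem_filter.1 hed).2
  have hne := mt (map_absorb_isDiag_iff c i j ed).2 hout
  induction ed with | _ a b
  simp only [Sym2.mem_iff, not_or] at hu
  simp only [Sym2.map_mk, Sym2.mk_isDiag_iff, edgeDist_mk, not_or] at hout hne ⊢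
  have hmem := (hc.erase_absorb hi hij).map_mem
  have hpos : 0 < dist (x (absorb c i j a)) (x (absorb c i j b)) :=
    dist_pos.2 (hx.ne (Finset.mem_of_mem_erase (hmem a (Ne.symm hu.1)))
      (Finset.mem_of_mem_erase (hmem b (Ne.symm hu.2))) hout)
  have hle := dist_absorb_le
    (hmin _ (hc.map_mem a (Ne.symm hu.1)) _ (hc.map_mem b (Ne.symm hu.2)) hne.1)
  rw [← inv_inv (4 : ℝ), ← mul_inv]
  refine inv_anti₀ (by positivity) ?_
  nlinarith

lemma outerProd_mul_pow_le [MetricSpace X] {x : V → X} {S : Finset V} {c : V → V}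
    (hc : IsClustering u S c) (hx : Set.InjOn x S) {i j : V} (hi : i ∈ S) (hj : j ∈ S)
    (hij : i ≠ j) (hmin : ∀ a ∈ S, ∀ b ∈ S, a ≠ b → dist (x i) (x j) ≤ dist (x a) (x b)) :
    outerProd G u x c * dist (x i) (x j) ^ (2 * (joiningEdges G u c i j).card)
      ≤ 4 ^ (edgesOff G u).card * outerProd G u x (absorb c i j) := by
  have hr : dist (x i) (x j) ≠ 0 := dist_ne_zero.2 (hx.ne hi hj hij)
  calc outerProd G u x c * dist (x i) (x j) ^ (2 * (joiningEdges G u c i j).card)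
      = ∏ ed ∈ edgesOff G u with ¬ (ed.map (absorb c i j)).IsDiag,
          (edgeDist x (ed.map c) ^ 2)⁻¹ := by
        rw [outerProd_eq_mul_prod x c hij, inv_pow, ← pow_mul, mul_right_comm,
          inv_mul_cancel₀ (pow_ne_zero _ hr), one_mul]
    _ ≤ 4 ^ ((edgesOff G u).filter fun ed => ¬ (ed.map (absorb c i j)).IsDiag).card
          * outerProd G u x (absorb c i j) := by
        rw [outerProd, ← Finset.prod_const, ← Finset.prod_mul_distrib]
        refine Finset.prod_le_prod (fun _ _ => by positivity) fun ed hed => ?_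
        obtain ⟨hed, hout⟩ := Finset.mem_filter.1 hed
        exact inv_sq_edgeDist_map_le hc hx hi hij hmin hed hout
    _ ≤ 4 ^ (edgesOff G u).card * outerProd G u x (absorb c i j) := by
        gcongr
        exacts [outerProd_nonneg _ _, by norm_num, Finset.filter_subset _ _]

lemma mul_pow_le_mul_pow_of_scale_le {A B ρ r : ℝ} {a b : ℕ} (hA : 0 ≤ A) (hρ : 0 ≤ ρ)
    (hρr : ρ ≤ r) (hr : 0 < r) (hba : b ≤ a) (h : A * r ^ a ≤ B * r ^ b) :
    A * ρ ^ a ≤ B * ρ ^ b := by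
  obtain ⟨k, rfl⟩ := Nat.exists_eq_add_of_le hba
  have hB : A * r ^ k ≤ B := by
    refine le_of_mul_le_mul_right (le_of_eq_of_le ?_ h) (pow_pos hr b)
    ring
  calc A * ρ ^ (b + k) = A * ρ ^ k * ρ ^ b := by ring
    _ ≤ A * r ^ k * ρ ^ b := by gcongr
    _ ≤ B * ρ ^ b := by gcongr

variable [MetricSpace X] {α : Type*} [LinearOrder α]

variable (G q u) in
/-- The propagators between the clusters are bounded by the edges of a tree on the representatives
with root `w`. The powers of the scale `ρ` balance the dimensions of the two sides; the factor `ρ`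
by which the right side exceeds this balance, against the factor `R` on the left, is the gain that
makes the integral converge. -/
def HasTreeBound (h : V → α) (x : V → X) (w : V) (S : Finset V) (c : V → V) (ρ : ℝ) : Prop :=
  ∃ (p : V → V) (R : ℝ), ρ ≤ R ∧ IsParentMap h x R w S p ∧
    outerProd G u x c * (∏ v ∈ S.erase w, dist (x v) (x (p v)) ^ q) * R * ρ ^ (q * Fintype.card V)
      ≤ (4 ^ (edgesOff G u).card) ^ S.card * ρ ^ (clusterDegree G q u S c + 1)

variable {h : V → α} {x : V → X} {w : V} {S : Finset V} {c : V → V}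

lemma hasTreeBound_of_card_eq_one (hG : G.IsRegularOfDegree q) (hc : IsClustering u S c)
    (hS : S.card = 1) (hw : w ∈ S) {ρ : ℝ} (hρ : 0 ≤ ρ) : HasTreeBound G q u h x w S c ρ := by
  have herase : S.erase w = ∅ := by
    rw [← Finset.card_eq_zero, Finset.card_erase_of_mem hw, hS]
  refine ⟨id, ρ, le_rfl, ⟨by simp [herase], by simp [herase], by simp [herase]⟩, ?_⟩
  rw [outerProd_of_card_eq_one x hc hS, hc.clusterDegree_of_card_eq_one hG hS, herase,
    Finset.prod_empty, one_mul, one_mul, mul_comm, ← pow_succ]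
  exact le_mul_of_one_le_left (by positivity) (one_le_pow₀ (one_le_pow₀ (by norm_num)))

lemma HasTreeBound.mono {ρ r : ℝ} (hρ : 0 < ρ) (hρr : ρ ≤ r)
    (hdeg : clusterDegree G q u S c < q * Fintype.card V)
    (hb : HasTreeBound G q u h x w S c r) : HasTreeBound G q u h x w S c ρ := by
  obtain ⟨p, R, hrR, hp, hbound⟩ := hb
  have hR : 0 ≤ R := (hρ.le.trans hρr).trans hrR
  refine ⟨p, R, hρr.trans hrR, hp, ?_⟩
  refine mul_pow_le_mul_pow_of_scale_le ?_ hρ.le hρr (hρ.trans_le hρr) hdeg hbound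
  have := outerProd_nonneg (G := G) (u := u) x c
  positivity

lemma HasTreeBound.of_absorb (hc : IsClustering u S c) (hx : Set.InjOn x S) {i j : V}
    (hi : i ∈ S) (hj : j ∈ S) (hij : i ≠ j) (hjw : j ≠ w) (hji : h j < h i)
    (hmin : ∀ a ∈ S, ∀ b ∈ S, a ≠ b → dist (x i) (x j) ≤ dist (x a) (x b))
    (hb : HasTreeBound G q u h x w (S.erase j) (absorb c i j) (dist (x i) (x j))) :
    HasTreeBound G q u h x w S c (dist (x i) (x j)) := by
  obtain ⟨p, R, hrR, hp, hbound⟩ := hb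
  have hr : 0 < dist (x i) (x j) := dist_pos.2 (hx.ne hi hj hij)
  have hR : 0 ≤ R := hr.le.trans hrR
  have hdeg := clusterDegree_absorb (G := G) (q := q) (u := u) c hij hj
  have houter := outerProd_mul_pow_le (G := G) hc hx hi hj hij hmin
  refine ⟨Function.update p j i, R, hrR, hp.update hi hji hrR, ?_⟩
  rw [prod_erase_dist_update_pow x p i hj hjw, ← Finset.card_erase_add_one hj]
  set r := dist (x i) (x j)
  set M := (joiningEdges G u c i j).card
  set K : ℝ := 4 ^ (edgesOff G u).card
  set Q := ∏ v ∈ (S.erase j).erase w, dist (x v) (x (p v)) ^ q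
  set N := q * Fintype.card V
  refine le_of_mul_le_mul_right ?_ (pow_pos hr (2 * M))
  calc outerProd G u x c * (r ^ q * Q) * R * r ^ N * r ^ (2 * M)
      = (outerProd G u x c * r ^ (2 * M)) * (r ^ q * Q * R * r ^ N) := by ring
    _ ≤ K * outerProd G u x (absorb c i j) * (r ^ q * Q * R * r ^ N) := by
        gcongr
    _ = K * r ^ q * (outerProd G u x (absorb c i j) * Q * R * r ^ N) := by ring
    _ ≤ K * r ^ q * (K ^ (S.erase j).card
          * r ^ (clusterDegree G q u (S.erase j) (absorb c i j) + 1)) := by gcongr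
    _ = K ^ ((S.erase j).card + 1)
          * r ^ (clusterDegree G q u (S.erase j) (absorb c i j) + q + 1) := by ring
    _ = K ^ ((S.erase j).card + 1) * r ^ (clusterDegree G q u S c + 1) * r ^ (2 * M) := by
        rw [hdeg]
        ring

lemma hasTreeBound_of_card_lt (hG : IsPrimitiveOfDegree G q) (hh : Function.Injective h)
    (hw : ∀ v, v ≠ w → h v < h w) {ρ : ℝ} (hρ : 0 < ρ) (hc : IsClustering u S c) (hwS : w ∈ S)
    (hx : ∀ a ∈ S, ∀ b ∈ S, a ≠ b → ρ ≤ dist (x a) (x b))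
    (hS : S.card + 1 < Fintype.card V) : HasTreeBound G q u h x w S c ρ := by
  induction hn : S.card using Nat.strong_induction_on generalizing S c ρ with | _ n ih
  obtain hS1 | hS2 : S.card = 1 ∨ 2 ≤ S.card := by
    have := Finset.card_pos.2 ⟨w, hwS⟩
    omega
  · exact hasTreeBound_of_card_eq_one hG.isRegularOfDegree hc hS1 hwS hρ.le
  obtain ⟨i, hi, j, hj, hij, hjw, hji, hmin⟩ := exists_closest_pair hh hw x hS2
  have hinj : Set.InjOn x S := fun a ha b hb hab => by
    by_contra hne
    exact (hρ.trans_le (hx a ha b hb hne)).ne' (dist_eq_zero.2 hab)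
  have hr : ρ ≤ dist (x i) (x j) := hx i hi j hj hij
  have hcard := Finset.card_erase_lt_of_mem hj
  refine HasTreeBound.mono hρ hr (hc.clusterDegree_lt hG hS2 hS)
    (HasTreeBound.of_absorb hc hinj hi hj hij hjw hji hmin ?_)
  exact ih _ (hn ▸ hcard) (hρ.trans_le hr) (hc.erase_absorb hi hij)
    (Finset.mem_erase.2 ⟨hjw.symm, hwS⟩)
    (fun a ha b hb hab => hmin a (Finset.mem_of_mem_erase ha) b (Finset.mem_of_mem_erase hb) hab)
    (by omega) rfl

lemma exists_isParentMap_propagatorProd_le (hG : IsPrimitiveOfDegree G q)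
    (hh : Function.Injective h) (hw : ∀ v, v ≠ w → h v < h w) (huw : u ≠ w)
    (hV : 3 ≤ Fintype.card V) (hx : Set.InjOn x {u}ᶜ) :
    ∃ (p : V → V) (ρ R : ℝ), 0 < ρ ∧ IsParentMap h x R w (Finset.univ.erase u) p ∧
      (∀ v ∈ (Finset.univ.erase u).erase w, ρ ≤ dist (x v) (x (p v))) ∧
      propagatorProd G u x * (∏ v ∈ (Finset.univ.erase u).erase w, dist (x v) (x (p v)) ^ q) * R
        ≤ (4 ^ (edgesOff G u).card) ^ (Finset.univ.erase u).card * ρ := by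
  set S := Finset.univ.erase u
  have hScard : S.card + 1 = Fintype.card V := Finset.card_erase_add_one (Finset.mem_univ u)
  have hxS : Set.InjOn x S := hx.mono fun v hv => Finset.ne_of_mem_erase hv
  obtain ⟨i, hi, j, hj, hij, hjw, hji, hmin⟩ := exists_closest_pair hh hw x (S := S) (by omega)
  have hr : 0 < dist (x i) (x j) := dist_pos.2 (hxS.ne hi hj hij)
  have hc : IsClustering u S id := isClustering_id u
  have hwS : w ∈ S := Finset.mem_erase.2 ⟨huw.symm, Finset.mem_univ w⟩
  have hcard := Finset.card_erase_lt_of_mem hj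
  obtain ⟨p, R, -, hp, hbound⟩ := HasTreeBound.of_absorb hc hxS hi hj hij hjw hji hmin
    (hasTreeBound_of_card_lt hG hh hw hr (hc.erase_absorb hi hij)
      (Finset.mem_erase.2 ⟨hjw.symm, hwS⟩) (fun a ha b hb => hmin a (Finset.mem_of_mem_erase ha) b
        (Finset.mem_of_mem_erase hb)) (by omega))
  refine ⟨p, dist (x i) (x j), R, hr, hp, fun v hv => hmin v (Finset.mem_of_mem_erase hv) _
    (hp.map_mem v hv) fun hvp => (hp.lt_map v hv).ne (congrArg h hvp), ?_⟩
  rw [clusterDegree_id, outerProd_id, pow_succ', ← mul_assoc] at hbound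
  exact le_of_mul_le_mul_right hbound (by positivity)

end Greedy

/-! ### Finiteness -/

section Finiteness

variable {V : Type*}

lemma le_prod_rpow_of_forall_le {t ε : ℝ} (ht : 0 < t) (ht' : t ≤ 1) (hε : 0 ≤ ε) {s : Finset V}
    (hs : ε * s.card ≤ 1) {m : V → ℝ} (hm : ∀ v ∈ s, t ≤ m v) : t ≤ ∏ v ∈ s, m v ^ ε := by
  calc t = t ^ (1 : ℝ) := (Real.rpow_one t).symm
    _ ≤ t ^ (ε * s.card) := Real.rpow_le_rpow_of_exponent_ge ht ht' hs
    _ = ∏ _v ∈ s, t ^ ε := by rw [Real.rpow_mul ht.le, Finset.prod_const, Real.rpow_natCast]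
    _ ≤ ∏ v ∈ s, m v ^ ε := Finset.prod_le_prod (fun _ _ => by positivity) fun v hv =>
        Real.rpow_le_rpow ht.le (hm v hv) hε

lemma exists_rank [Finite V] {w z : V} (hwz : w ≠ z) :
    ∃ h : V → ℕ, Function.Injective h ∧ (∀ v, v ≠ w → h v < h w) ∧
      ∀ v, v ≠ w → v ≠ z → h v < h z := by
  cases nonempty_fintype V
  obtain ⟨f, hf, hlt⟩ : ∃ f : V → ℕ, (∀ a b, f a = f b → a = b) ∧ ∀ v, f v < Fintype.card V :=
    ⟨fun v => Fintype.equivFin V v, fun _ _ hab => (Fintype.equivFin V).injective (Fin.ext hab),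
      fun v => (Fintype.equivFin V v).2⟩
  refine ⟨Function.update (Function.update f z (Fintype.card V)) w (Fintype.card V + 1),
    fun a b hab => ?_, fun v hv => ?_, fun v hv hv' => ?_⟩
  · simp only [Function.update_apply] at hab
    grind
  · grind
  · grind

lemma div_le_min_inv {ρ r R : ℝ} (hρ : 0 < ρ) (hρr : ρ ≤ r) (hrR : r ≤ R) (hρ1 : ρ ≤ 1)
    (hR1 : 1 ≤ R) : ρ / R ≤ min r r⁻¹ := by
  refine le_min ((div_le_self hρ.le hR1).trans hρr) ?_
  rw [inv_eq_one_div]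
  exact div_le_div₀ zero_le_one hρ1 (hρ.trans_le hρr) hrR

variable [Fintype V] {G : SimpleGraph V} {q : ℕ}

lemma propagatorProd_le_prod_scaleKernel {X α : Type*} [MetricSpace X] [LinearOrder α]
    (hG : IsPrimitiveOfDegree G q) {h : V → α} (hh : Function.Injective h) {u w z : V}
    (huw : u ≠ w) (huz : u ≠ z) (hwz : w ≠ z) (hw : ∀ v, v ≠ w → h v < h w)
    (hz : ∀ v, v ≠ w → v ≠ z → h v < h z) {x : V → X} (hx : Set.InjOn x {u}ᶜ)
    (hzw : dist (x z) (x w) = 1) :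
    ∃ p : V → V, (∀ v ∈ ({u, w, z}ᶜ : Finset V), h v < h (p v)) ∧
      propagatorProd G u x ≤ (4 ^ (edgesOff G u).card) ^ (Finset.univ.erase u).card *
        ∏ v ∈ {u, w, z}ᶜ, scaleKernel q (1 / Fintype.card V) (dist (x v) (x (p v))) := by
  have hS : (Finset.univ.erase u).erase w = insert z {u, w, z}ᶜ := by
    grind [Finset.mem_compl]
  have hV : 3 ≤ Fintype.card V := by
    rw [← Finset.card_eq_three.2 ⟨u, w, z, huw, huz, hwz, rfl⟩]
    exact Finset.card_le_univ _
  obtain ⟨p, ρ, R, hρ, hp, hsep, hbound⟩ :=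
    exists_isParentMap_propagatorProd_le hG hh hw huw hV hx
  obtain ⟨-, hlt, hle⟩ := hp
  simp only [hS, Finset.mem_insert, forall_eq_or_imp] at hlt hle hsep
  have hpz : p z = w := by
    by_contra hne
    exact (hz (p z) hne fun h' => hlt.1.ne (congrArg h h').symm).not_gt hlt.1
  rw [hpz, hzw] at hle hsep
  rw [hS, Finset.prod_insert (by simp), hpz, hzw, one_pow, one_mul] at hbound
  have hR : 0 < R := one_pos.trans_le hle.1
  have gain : ρ / R ≤ ∏ v ∈ ({u, w, z}ᶜ : Finset V),
      min (dist (x v) (x (p v))) (dist (x v) (x (p v)))⁻¹ ^ (1 / Fintype.card V : ℝ) := by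
    refine le_prod_rpow_of_forall_le (by positivity) ((div_le_one hR).2 (hsep.1.trans hle.1))
      (by positivity) ?_ fun v hv => div_le_min_inv hρ (hsep.2 v hv) (hle.2 v hv) hsep.1 hle.1
    rw [one_div_mul_eq_div]
    exact div_le_one_of_le₀ (by exact_mod_cast Finset.card_le_univ _) (by positivity)
  have hpos : 0 < ∏ v ∈ ({u, w, z}ᶜ : Finset V), dist (x v) (x (p v)) ^ q :=
    Finset.prod_pos fun v hv => pow_pos (hρ.trans_le (hsep.2 v hv)) q
  refine ⟨p, hlt.2, ?_⟩
  simp only [scaleKernel, Finset.prod_mul_distrib, Real.rpow_neg dist_nonneg, Real.rpow_natCast,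
    Finset.prod_inv_distrib]
  rw [← mul_assoc, mul_right_comm, ← div_eq_mul_inv, le_div_iff₀ hpos]
  rw [← le_div_iff₀ hR, mul_div_assoc] at hbound
  exact hbound.trans (mul_le_mul_of_nonneg_left gain (by positivity))

variable {E : Type*} [NormedAddCommGroup E] [InnerProductSpace ℝ E]

lemma conformalDensity_le_prod_scaleKernel {α : Type*} [LinearOrder α]
    (hG : IsPrimitiveOfDegree G q) (hq : q ≠ 0) {h : V → α} (hh : Function.Injective h)
    {u w z : V} (huw : u ≠ w) (huz : u ≠ z) (hwz : w ≠ z) (hw : ∀ v, v ≠ w → h v < h w)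
    (hz : ∀ v, v ≠ w → v ≠ z → h v < h z) {x : V → E} (hx : Set.InjOn x {u}ᶜ)
    (hzw : dist (x z) (x w) = 1) :
    ∃ p : V → V, (∀ v ∈ ({u, w, z}ᶜ : Finset V), h v < h (p v)) ∧
      conformalDensity G q u x
        ≤ ((4 ^ (edgesOff G u).card) ^ (Finset.univ.erase u).card) ^ (finrank ℝ E / q : ℝ) *
          ∏ v ∈ {u, w, z}ᶜ, scaleKernel (finrank ℝ E)
            (1 / Fintype.card V * (finrank ℝ E / q)) ‖x v - x (p v)‖ := by
  obtain ⟨p, hp, hle⟩ := propagatorProd_le_prod_scaleKernel hG hh huw huz hwz hw hz hx hzw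
  have hnonneg (v : V) (_ : v ∈ ({u, w, z}ᶜ : Finset V)) :
      0 ≤ scaleKernel q (1 / Fintype.card V) (dist (x v) (x (p v))) :=
    scaleKernel_nonneg _ _ dist_nonneg
  refine ⟨p, hp, (Real.rpow_le_rpow (propagatorProd_nonneg _ _ _) hle (by positivity)).trans_eq ?_⟩
  have hqd : (q : ℝ) * (finrank ℝ E / q) = finrank ℝ E := by field_simp
  rw [Real.mul_rpow (by positivity) (Finset.prod_nonneg hnonneg),
    ← Real.finsetProd_rpow _ _ hnonneg]
  congr 1
  exact Finset.prod_congr rfl fun v _ => by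
    rw [scaleKernel_rpow _ _ _ dist_nonneg, hqd, dist_eq_norm]

lemma exists_ofReal_conformalDensity_le_sum {α : Type*} [LinearOrder α]
    (hG : IsPrimitiveOfDegree G q) (hq : q ≠ 0) {h : V → α} (hh : Function.Injective h)
    {u w z : V} (huw : u ≠ w) (huz : u ≠ z) (hwz : w ≠ z) (hw : ∀ v, v ≠ w → h v < h w)
    (hz : ∀ v, v ≠ w → v ≠ z → h v < h z) :
    ∃ C : ℝ≥0∞, C < ⊤ ∧ ∀ x : V → E, Set.InjOn x {u}ᶜ → dist (x z) (x w) = 1 →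
      ENNReal.ofReal (conformalDensity G q u x) ≤
        C * ∑ p : V → V with ∀ v ∈ ({u, w, z}ᶜ : Finset V), h v < h (p v), ∏ v ∈ {u, w, z}ᶜ,
          ENNReal.ofReal (scaleKernel (finrank ℝ E)
            (1 / Fintype.card V * (finrank ℝ E / q)) ‖x v - x (p v)‖) := by
  refine ⟨ENNReal.ofReal
    (((4 ^ (edgesOff G u).card) ^ (Finset.univ.erase u).card) ^ (finrank ℝ E / q : ℝ)),
    ENNReal.ofReal_lt_top, fun x hx hzw => ?_⟩
  obtain ⟨p, hp, hle⟩ :=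
    conformalDensity_le_prod_scaleKernel hG hq hh huw huz hwz hw hz hx hzw
  refine (ENNReal.ofReal_le_ofReal hle).trans ?_
  rw [ENNReal.ofReal_mul (by positivity),
    ENNReal.ofReal_prod_of_nonneg fun v _ => scaleKernel_nonneg _ _ (norm_nonneg _)]
  gcongr
  exact Finset.single_le_sum
    (f := fun p : V → V => ∏ v ∈ ({u, w, z}ᶜ : Finset V), ENNReal.ofReal
      (scaleKernel (finrank ℝ E) (1 / Fintype.card V * (finrank ℝ E / q)) ‖x v - x (p v)‖))
    (fun _ _ => zero_le) (by simpa using hp)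

variable [FiniteDimensional ℝ E] [MeasurableSpace E] [BorelSpace E]

theorem periodLIntegral_lt_top (hG : IsPrimitiveOfDegree G q) (hq : q ≠ 0)
    {u w z : V} (huw : u ≠ w) (huz : u ≠ z) (hwz : w ≠ z) {e : E} (he : ‖e‖ = 1) :
    periodLIntegral G q u w z e < ⊤ := by
  have he0 : e ≠ 0 := norm_ne_zero_iff.1 (he ▸ one_ne_zero)
  have : Nontrivial E := nontrivial_of_ne e 0 he0
  obtain ⟨h, hh, hw, hz⟩ := exists_rank hwz
  obtain ⟨C, hC, density_le⟩ :=
    exists_ofReal_conformalDensity_le_sum (E := E) hG hq hh huw huz hwz hw hz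
  set s : Finset V := {u, w, z}ᶜ
  set ε : ℝ := 1 / Fintype.card V * (finrank ℝ E / q)
  set g : E → ℝ≥0∞ := fun t => ENNReal.ofReal (scaleKernel (finrank ℝ E) ε ‖t‖)
  set parentMaps : Finset (V → V) := {p | ∀ v ∈ s, h v < h (p v)}
  have hg : Measurable g := by fun_prop
  have hε : 0 < ε := by
    have : Nonempty V := ⟨u⟩
    have := Module.finrank_pos (R := ℝ) (M := E)
    positivity
  have lintegral_g : ∫⁻ t, g t < ⊤ := (integrable_scaleKernel_norm hε).lintegral_lt_top
  calc periodLIntegral G q u w z e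
      ≤ (∫⋯∫⁻_s, fun x => C * ∑ p ∈ parentMaps, ∏ v ∈ s, g (x v - x (p v))
          ∂fun _ => volume) (Pi.single z e) := by
        refine lintegral_mono_ae ?_
        filter_upwards [ae_injOn_compl_updateFinset_single (u := u) hwz he0] with t hx
        exact density_le _ hx (by simp [Function.updateFinset, hwz, he])
    _ = C * ∑ p ∈ parentMaps, (∫⋯∫⁻_s, fun x => ∏ v ∈ s, g (x v - x (p v))
          ∂fun _ => volume) (Pi.single z e) := by
        rw [lmarginal, lintegral_const_mul _ (by fun_prop), lintegral_finsetSum _ (by fun_prop)]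
        rfl
    _ = C * ∑ _p ∈ parentMaps, (∫⁻ t, g t) ^ s.card := by
        congr 1
        exact Finset.sum_congr rfl fun p hp =>
          lmarginal_prod_sub_parent h p hg (Finset.mem_filter.1 hp).2 _
    _ < ⊤ := ENNReal.mul_lt_top hC (ENNReal.sum_lt_top.2 fun _ _ => ENNReal.pow_lt_top lintegral_g)

end Finiteness

/-! ### Position-space integrals -/

section PositionIntegral

variable {V : Type*} {E : Type*} [NormedAddCommGroup E]

/-- The configuration that puts `w` at the origin, `z` at `e` and the vertices outside `{u, w, z}`
at the positions `x`; the vertex `u`, which lies at infinity, gets the junk position `0`. -/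
noncomputable def pinnedConfig (u w z : V) (e : E)
    (x : {v : V // v ≠ u ∧ v ≠ w ∧ v ≠ z} → E) (v : V) : E :=
  if h : v ≠ u ∧ v ≠ w ∧ v ≠ z then x ⟨v, h⟩ else (Pi.single z e : V → E) v

lemma extendPos_eq_pinnedConfig (u : V) {w z : V} (hwz : w ≠ z) (e : R4) :
    extendPos u w z e = pinnedConfig u w z e := by
  ext1 x
  ext1 v
  by_cases hv : v ≠ u ∧ v ≠ w ∧ v ≠ z
  · simp [extendPos, pinnedConfig, hv]
  · simp only [extendPos, pinnedConfig, hv, Pi.single_apply]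
    grind

variable [InnerProductSpace ℝ E] [Fintype V] (G : SimpleGraph V) (q : ℕ)

/-- The generalization of `periodIntegrand` to `q`-regular graphs and arbitrary dimension. -/
noncomputable def conformalIntegrand (u w z : V) (e : E)
    (x : {v : V // v ≠ u ∧ v ≠ w ∧ v ≠ z} → E) : ℝ :=
  conformalDensity G q u (pinnedConfig u w z e x)

lemma periodIntegrand_eq_conformalIntegrand (u : V) {w z : V} (hwz : w ≠ z) (e : R4) :
    periodIntegrand G u w z e = conformalIntegrand G 4 u w z e := by
  ext1 x
  have hexp : (finrank ℝ R4 / (4 : ℕ) : ℝ) = 1 := by simp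
  rw [conformalIntegrand, conformalDensity, hexp, Real.rpow_one,
    ← extendPos_eq_pinnedConfig u hwz]
  refine Finset.prod_congr rfl fun ed _ => ?_
  induction ed with | _ i j
  rw [edgeDist_mk, dist_eq_norm, Sym2.lift_mk]

variable [FiniteDimensional ℝ E] [MeasurableSpace E] [BorelSpace E]

lemma measurable_conformalIntegrand (u w z : V) (e : E) :
    Measurable (conformalIntegrand G q u w z e) := by
  refine (measurable_conformalDensity G q u).comp (measurable_pi_lambda _ fun v => ?_)
  unfold pinnedConfig
  split_ifs <;> fun_prop

lemma lintegral_ofReal_conformalIntegrand (u w z : V) (e : E) :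
    ∫⁻ x, ENNReal.ofReal (conformalIntegrand G q u w z e x) = periodLIntegral G q u w z e :=
  lintegral_pi_subtype_eq_lmarginal (μ := volume) (s := {u, w, z}ᶜ)
    (fun v => v ≠ u ∧ v ≠ w ∧ v ≠ z) (by simp)
    (Pi.single z e) fun y => ENNReal.ofReal (conformalDensity G q u y)

lemma integral_conformalIntegrand (u w z : V) (e : E) :
    ∫ x, conformalIntegrand G q u w z e x = (periodLIntegral G q u w z e).toReal := by
  rw [← lintegral_ofReal_conformalIntegrand]
  exact integral_eq_lintegral_of_nonneg_ae (ae_of_all _ fun _ => conformalDensity_nonneg _ _ _ _)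
    (measurable_conformalIntegrand G q u w z e).aestronglyMeasurable

variable {G q}

lemma integrable_conformalIntegrand (hG : IsPrimitiveOfDegree G q) (hq : q ≠ 0)
    {u w z : V} (huw : u ≠ w) (huz : u ≠ z) (hwz : w ≠ z) {e : E} (he : ‖e‖ = 1) :
    Integrable (conformalIntegrand G q u w z e) := by
  rw [← lintegral_ofReal_ne_top_iff_integrable
      (measurable_conformalIntegrand G q u w z e).aestronglyMeasurable
      (ae_of_all _ fun _ => conformalDensity_nonneg _ _ _ _),
    lintegral_ofReal_conformalIntegrand]
  exact (periodLIntegral_lt_top hG hq huw huz hwz he).ne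

theorem positionIntegral_finite_and_independent_general
    (hG : IsPrimitiveOfDegree G q) (hq : q ≠ 0) :
    (∀ (u w z : V) (e : E), u ≠ w → u ≠ z → w ≠ z → ‖e‖ = 1 →
      Integrable (conformalIntegrand G q u w z e)) ∧
    (∀ (u w z : V) (e : E) (u' w' z' : V) (e' : E),
      u ≠ w → u ≠ z → w ≠ z → ‖e‖ = 1 →
      u' ≠ w' → u' ≠ z' → w' ≠ z' → ‖e'‖ = 1 →
      ∫ x, conformalIntegrand G q u w z e x = ∫ x, conformalIntegrand G q u' w' z' e' x) := by
  refine ⟨fun u w z e huw huz hwz he => integrable_conformalIntegrand hG hq huw huz hwz he,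
    fun u w z e u' w' z' e' huw huz hwz he huw' huz' hwz' he' => ?_⟩
  rw [integral_conformalIntegrand, integral_conformalIntegrand,
    periodLIntegral_eq_periodLIntegral hG.isRegularOfDegree hq huw huz hwz huw' huz' hwz' he he']

end PositionIntegral

/-- For a completed primitive graph on at least 5 vertices, the affine position-space
integral `I(u,w,z,e)` is finite (the integrand is integrable) for every choice of three
distinct vertices `u, w, z` and unit vector `e`, and its value is independent of all these
choices. -/
theorem positionIntegral_finite_and_independent {V : Type*} [Fintype V]
    (G : SimpleGraph V) (h : CompletedPrimitive G) (hcard : 5 ≤ Fintype.card V) :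
    (∀ (u w z : V) (e : R4), u ≠ w → u ≠ z → w ≠ z → ‖e‖ = 1 →
      Integrable (periodIntegrand G u w z e)) ∧
    (∀ (u w z : V) (e : R4) (u' w' z' : V) (e' : R4),
      u ≠ w → u ≠ z → w ≠ z → ‖e‖ = 1 →
      u' ≠ w' → u' ≠ z' → w' ≠ z' → ‖e'‖ = 1 →
      positionIntegral G u w z e = positionIntegral G u' w' z' e') := by
  obtain ⟨integrable, independent⟩ := positionIntegral_finite_and_independent_general (E := R4)
    h.isPrimitiveOfDegree four_ne_zero
  refine ⟨fun u w z e huw huz hwz he => ?_,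
    fun u w z e u' w' z' e' huw huz hwz he huw' huz' hwz' he' => ?_⟩
  · rw [periodIntegrand_eq_conformalIntegrand G u hwz]
    exact integrable u w z e huw huz hwz he
  · rw [positionIntegral, positionIntegral, periodIntegrand_eq_conformalIntegrand G u hwz,
      periodIntegrand_eq_conformalIntegrand G u' hwz']
    exact independent u w z e u' w' z' e' huw huz hwz he huw' huz' hwz' he'
end

section
/- (Schwinger trick / Feynman parametrization.) For every integer n ≥ 2 and all positive real numbers Q₁, Q₂, …, Q_n, one has ∫_{(0,∞)^{n−1}} (Q₁ + α₂Q₂ + ⋯ + α_nQ_n)^{−n} dα₂ ⋯ dα_n = 1 / ((n−1)! · Q₁ · Q₂ ⋯ Q_n). -/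
open scoped ENNReal

/-!
Schwinger's representation `Γ(s) A ^ (-s) = ∫₀^∞ t ^ (s - 1) e ^ (-A t) dt` turns a power of the
linear form `A = c + ∑ αᵢ qᵢ` into an exponential, which factors over the coordinates. By Tonelli
the integral over `α` may be taken first, and it is a product of one-dimensional Gamma integrals;
the remaining integral over `t` is again a Gamma integral. Nothing changes if each `αᵢ` carries a
weight `αᵢ ^ (aᵢ - 1)`; the Schwinger trick is the case where all `aᵢ` are `1` and `s` exceeds
their number by `1`.
-/

open MeasureTheory Set Real

theorem lintegral_rpow_mul_exp_neg_mul_Ioi {a r : ℝ} (ha : 0 < a) (hr : 0 < r) :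
    ∫⁻ t in Ioi (0 : ℝ), ENNReal.ofReal (t ^ (a - 1) * exp (-(r * t))) =
      ENNReal.ofReal (Gamma a / r ^ a) := by
  have hvalue : ∫ t in Ioi (0 : ℝ), t ^ (a - 1) * exp (-(r * t)) = Gamma a / r ^ a := by
    rw [integral_rpow_mul_exp_neg_mul_Ioi ha hr, one_div, inv_rpow hr.le, inv_mul_eq_div]
  have hvalue_pos : 0 < Gamma a / r ^ a := div_pos (Gamma_pos_of_pos ha) (rpow_pos_of_pos hr _)
  have hint : IntegrableOn (fun t : ℝ => t ^ (a - 1) * exp (-(r * t))) (Ioi 0) :=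
    .of_integral_ne_zero (hvalue ▸ hvalue_pos.ne')
  rw [← hvalue, ofReal_integral_eq_lintegral_ofReal hint]
  filter_upwards [ae_restrict_mem measurableSet_Ioi] with t (ht : 0 < t)
  positivity

section Tonelli

variable {ι : Type*} {X : ι → Type*} [∀ i, MeasurableSpace (X i)]
  (μ : ∀ i, Measure (X i)) [∀ i, SigmaFinite (μ i)] {f : ∀ i, X i → ℝ≥0∞}

theorem lmarginal_prod_eq_prod_lintegral [DecidableEq ι] (hf : ∀ i, Measurable (f i))
    (s : Finset ι) (x : ∀ i, X i) :
    (∫⋯∫⁻_s, (fun y => ∏ i ∈ s, f i (y i)) ∂μ) x = ∏ i ∈ s, ∫⁻ z, f i z ∂μ i := by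
  induction s using Finset.induction_on with
  | empty => simp
  | insert j s hj ih =>
    have hinner (y : ∀ i, X i) :
        ∫⁻ z, ∏ i ∈ insert j s, f i (Function.update y j z i) ∂μ j =
          (∫⁻ z, f j z ∂μ j) * ∏ i ∈ s, f i (y i) := by
      rw [← lintegral_mul_const _ (hf j)]
      refine lintegral_congr fun z => ?_
      rw [Finset.prod_insert hj, Function.update_self]
      congr 1
      refine Finset.prod_congr rfl fun i hi => ?_
      rw [Function.update_of_ne (ne_of_mem_of_not_mem hi hj)]
    rw [lmarginal_insert' _ (by fun_prop) hj, Finset.prod_insert hj, ← ih]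
    simp only [hinner, lmarginal]
    exact lintegral_const_mul _ (by fun_prop)

theorem lintegral_fintype_prod_eq_prod [Fintype ι] (hf : ∀ i, Measurable (f i)) :
    ∫⁻ x, ∏ i, f i (x i) ∂Measure.pi μ = ∏ i, ∫⁻ z, f i z ∂μ i := by
  classical
  obtain hX | ⟨⟨x⟩⟩ := isEmpty_or_nonempty (∀ i, X i)
  · obtain ⟨i, hi⟩ : ∃ i, IsEmpty (X i) := isEmpty_pi.mp hX
    rw [lintegral_of_isEmpty, Finset.prod_eq_zero (Finset.mem_univ i) (lintegral_of_isEmpty _ _)]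
  · rw [lintegral_eq_lmarginal_univ x, lmarginal_prod_eq_prod_lintegral μ hf]

end Tonelli

section Orthant

theorem setOf_forall_pos_eq_univ_pi {ι : Type*} :
    {α : ι → ℝ | ∀ i, 0 < α i} = univ.pi fun _ => Ioi 0 := by
  ext
  simp

theorem measurableSet_setOf_forall_pos {ι : Type*} [Countable ι] :
    MeasurableSet {α : ι → ℝ | ∀ i, 0 < α i} :=
  setOf_forall_pos_eq_univ_pi (ι := ι) ▸ .univ_pi fun _ => measurableSet_Ioi

variable {ι : Type*} [Fintype ι] {a q : ι → ℝ}

theorem lintegral_orthant_prod_rpow_mul_exp (ha : ∀ i, 0 < a i) (hq : ∀ i, 0 < q i)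
    {t : ℝ} (ht : 0 < t) :
    ∫⁻ α in {α : ι → ℝ | ∀ i, 0 < α i},
        ENNReal.ofReal (∏ i, α i ^ (a i - 1) * exp (-(t * q i * α i))) =
      ENNReal.ofReal ((∏ i, Gamma (a i) / q i ^ a i) / t ^ ∑ i, a i) := by
  calc ∫⁻ α in {α : ι → ℝ | ∀ i, 0 < α i},
        ENNReal.ofReal (∏ i, α i ^ (a i - 1) * exp (-(t * q i * α i)))
    _ = ∫⁻ α in {α : ι → ℝ | ∀ i, 0 < α i},
          ∏ i, ENNReal.ofReal (α i ^ (a i - 1) * exp (-(t * q i * α i))) := by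
        refine setLIntegral_congr_fun measurableSet_setOf_forall_pos
          fun α (hα : ∀ i, 0 < α i) => ENNReal.ofReal_prod_of_nonneg fun i _ => ?_
        have := hα i
        positivity
    _ = ∏ i, ∫⁻ x in Ioi (0 : ℝ), ENNReal.ofReal (x ^ (a i - 1) * exp (-(t * q i * x))) := by
        rw [setOf_forall_pos_eq_univ_pi, volume_pi, Measure.restrict_pi_pi]
        exact lintegral_fintype_prod_eq_prod (fun _ : ι => volume.restrict (Ioi (0 : ℝ)))
          (f := fun i x => ENNReal.ofReal (x ^ (a i - 1) * exp (-(t * q i * x)))) (by fun_prop)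
    _ = ∏ i, ENNReal.ofReal (Gamma (a i) / (t * q i) ^ a i) :=
        Finset.prod_congr rfl fun i _ =>
          lintegral_rpow_mul_exp_neg_mul_Ioi (ha i) (mul_pos ht (hq i))
    _ = ENNReal.ofReal ((∏ i, Gamma (a i) / q i ^ a i) / t ^ ∑ i, a i) := by
        rw [← ENNReal.ofReal_prod_of_nonneg fun i _ => ?_,
          rpow_sum_of_pos ht, ← Finset.prod_div_distrib]
        · simp only [mul_rpow ht.le (hq _).le, div_div, mul_comm]
        · have := ha i
          have := hq i
          positivity

end Orthant

/-- The integrand `Γ(s)⁻¹ t ^ (s - 1) e ^ (-A t) ∏ αᵢ ^ (aᵢ - 1)`, `A = c + ∑ αᵢ qᵢ`, of the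
Schwinger representation of `A ^ (-s) ∏ αᵢ ^ (aᵢ - 1)`. The exponential is written as a product, so
that the factor depending on `α` is visibly a product over the coordinates. -/
noncomputable def schwingerKernel {ι : Type*} [Fintype ι] (s c : ℝ) (a q α : ι → ℝ) (t : ℝ) : ℝ :=
  (Gamma s)⁻¹ * (t ^ (s - 1) * exp (-(c * t))) *
    ∏ i, α i ^ (a i - 1) * exp (-(t * q i * α i))

namespace schwingerKernel

variable {ι : Type*} [Fintype ι] {s c : ℝ} {a q : ι → ℝ}

theorem eq_rpow_mul_exp_neg_mul (α : ι → ℝ) (t : ℝ) :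
    schwingerKernel s c a q α t = (Gamma s)⁻¹ * (∏ i, α i ^ (a i - 1)) *
      (t ^ (s - 1) * exp (-((c + ∑ i, α i * q i) * t))) := by
  have hexp : exp (-((c + ∑ i, α i * q i) * t)) =
      exp (-(c * t)) * ∏ i, exp (-(t * q i * α i)) := by
    rw [← exp_sum, ← exp_add, Finset.sum_neg_distrib, add_mul, neg_add, Finset.sum_mul]
    congr! 4
    ring
  rw [schwingerKernel, hexp, Finset.prod_mul_distrib]
  ring

theorem measurable_uncurry : Measurable (Function.uncurry (schwingerKernel s c a q)) := by
  unfold schwingerKernel Function.uncurry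
  fun_prop

theorem lintegral_Ioi (hs : 0 < s) (hc : 0 < c) (hq : ∀ i, 0 < q i) {α : ι → ℝ}
    (hα : ∀ i, 0 < α i) :
    ∫⁻ t in Ioi (0 : ℝ), ENNReal.ofReal (schwingerKernel s c a q α t) =
      ENNReal.ofReal ((∏ i, α i ^ (a i - 1)) / (c + ∑ i, α i * q i) ^ s) := by
  have hΓ : 0 < Gamma s := Gamma_pos_of_pos hs
  have hweight : 0 < ∏ i, α i ^ (a i - 1) := Finset.prod_pos fun i _ => rpow_pos_of_pos (hα i) _
  have hform : 0 < c + ∑ i, α i * q i :=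
    add_pos_of_pos_of_nonneg hc (Finset.sum_nonneg fun i _ => (mul_pos (hα i) (hq i)).le)
  simp only [eq_rpow_mul_exp_neg_mul,
    ENNReal.ofReal_mul (mul_pos (inv_pos.mpr hΓ) hweight).le]
  rw [lintegral_const_mul _ (by fun_prop), lintegral_rpow_mul_exp_neg_mul_Ioi hs hform,
    ← ENNReal.ofReal_mul (by positivity)]
  congr 1
  field_simp

theorem lintegral_orthant (hs : 0 < s) (ha : ∀ i, 0 < a i) (hq : ∀ i, 0 < q i) {t : ℝ}
    (ht : 0 < t) :
    ∫⁻ α in {α : ι → ℝ | ∀ i, 0 < α i}, ENNReal.ofReal (schwingerKernel s c a q α t) =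
      ENNReal.ofReal ((Gamma s)⁻¹ * ∏ i, Gamma (a i) / q i ^ a i) *
        ENNReal.ofReal (t ^ (s - ∑ i, a i - 1) * exp (-(c * t))) := by
  have hfactor : 0 ≤ (Gamma s)⁻¹ * (t ^ (s - 1) * exp (-(c * t))) := by positivity
  simp only [schwingerKernel, ENNReal.ofReal_mul hfactor]
  rw [lintegral_const_mul _ (by fun_prop), lintegral_orthant_prod_rpow_mul_exp ha hq ht,
    ← ENNReal.ofReal_mul hfactor, ← ENNReal.ofReal_mul' (by positivity),
    sub_right_comm, rpow_sub ht (s - 1)]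
  congr 1
  ring

end schwingerKernel

theorem schwinger_trick_general {ι : Type*} [Fintype ι] {b c : ℝ} {a q : ι → ℝ} (hb : 0 < b)
    (hc : 0 < c) (ha : ∀ i, 0 < a i) (hq : ∀ i, 0 < q i) :
    ∫⁻ α in {α : ι → ℝ | ∀ i, 0 < α i}, ENNReal.ofReal
        ((∏ i, α i ^ (a i - 1)) / (c + ∑ i, α i * q i) ^ (b + ∑ i, a i)) =
      ENNReal.ofReal ((Gamma b / c ^ b * ∏ i, Gamma (a i) / q i ^ a i) / Gamma (b + ∑ i, a i)) := by
  set s := b + ∑ i, a i with hs_def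
  have hs : 0 < s := add_pos_of_pos_of_nonneg hb (Finset.sum_nonneg fun i _ => (ha i).le)
  have hb_eq : s - ∑ i, a i = b := by rw [hs_def, add_sub_cancel_right]
  calc ∫⁻ α in {α : ι → ℝ | ∀ i, 0 < α i}, ENNReal.ofReal
          ((∏ i, α i ^ (a i - 1)) / (c + ∑ i, α i * q i) ^ s)
    _ = ∫⁻ α in {α : ι → ℝ | ∀ i, 0 < α i}, ∫⁻ t in Ioi (0 : ℝ),
          ENNReal.ofReal (schwingerKernel s c a q α t) :=
        setLIntegral_congr_fun measurableSet_setOf_forall_pos fun _ hα =>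
          (schwingerKernel.lintegral_Ioi hs hc hq hα).symm
    _ = ∫⁻ t in Ioi (0 : ℝ), ∫⁻ α in {α : ι → ℝ | ∀ i, 0 < α i},
          ENNReal.ofReal (schwingerKernel s c a q α t) :=
        lintegral_lintegral_swap schwingerKernel.measurable_uncurry.ennreal_ofReal.aemeasurable
    _ = ∫⁻ t in Ioi (0 : ℝ), ENNReal.ofReal ((Gamma s)⁻¹ * ∏ i, Gamma (a i) / q i ^ a i) *
          ENNReal.ofReal (t ^ (b - 1) * exp (-(c * t))) :=
        setLIntegral_congr_fun measurableSet_Ioi fun _ ht =>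
          hb_eq ▸ schwingerKernel.lintegral_orthant hs ha hq ht
    _ = ENNReal.ofReal ((Gamma b / c ^ b * ∏ i, Gamma (a i) / q i ^ a i) / Gamma s) := by
        rw [lintegral_const_mul _ (by fun_prop), lintegral_rpow_mul_exp_neg_mul_Ioi hb hc,
          ← ENNReal.ofReal_mul' (by positivity)]
        congr 1
        ring

/-- **Schwinger trick / Feynman parametrization.** For `n = m + 1 ≥ 2` and positive reals
`Q₀, …, Q_m`,
`∫_{(0,∞)^m} (Q₀ + α₁Q₁ + ⋯ + α_mQ_m)^{−n} dα = 1 / ((n−1)! · Q₀ ⋯ Q_m)`. -/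
theorem schwinger_trick (m : ℕ) (hm : 1 ≤ m) (Q : Fin (m + 1) → ℝ) (hQ : ∀ i, 0 < Q i) :
    (∫⁻ α in {α : Fin m → ℝ | ∀ i, 0 < α i},
        ENNReal.ofReal (((Q 0 + ∑ i : Fin m, α i * Q i.succ) ^ (m + 1))⁻¹)) =
      ENNReal.ofReal (1 / ((m.factorial : ℝ) * ∏ i, Q i)) := by
  simpa [add_comm (1 : ℝ), Gamma_nat_eq_factorial, Fin.prod_univ_succ, ← rpow_natCast,
    div_eq_mul_inv, mul_comm (Q 0)⁻¹] using
    schwinger_trick_general one_pos (hQ 0) (fun _ => one_pos) fun i : Fin m => hQ i.succ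
end
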